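/- arXiv:2307.05859 — 2 statements merged into one kernel-verified Lean document; each statement's English description precedes it below -/
import Mathlib

section
/- Let k be an algebraically closed field of characteristic zero and n ≥ 1 an integer. Let f, g, h be irreducible, pairwise relatively prime polynomials in the polynomial ring k[x_1,…,x_n] such that f^a + g^b + h^c = 0 for integers a ≥ b ≥ c ≥ 1. Then c = 1. -/
/-!
Let `c ≥ 2`. The relation `f ^ a + g ^ b + h ^ c = 0` makes `f ^ (a - 1)` divide a Wronskian of `g`
and `h`, whence `a * deg f < deg f + deg g + deg h`, and likewise for `g` and `h`. These three
inequalities force `1 / a + 1 / b + 1 / c > 1`, that is, the exponents are `(a, 2, 2)`, `(3, 3, 2)`,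
`(4, 3, 2)` or `(5, 3, 2)`. In the first three cases one splits a sum of two powers over roots of
unity; by unique factorization all factors but at most one are constant, which makes one of the
polynomials constant or a polynomial of degree at least 2 in another one, hence reducible.

In the icosahedral case `(5, 3, 2)`, Klein's identity parametrizes the solutions: after rescaling,
`f = F(u, v)`, `g = G(u, v)`, `h = H(u, v)` for the icosahedral forms `F`, `G`, `H` of degrees
12, 20, 30 and elements `u`, `v` of an algebraic closure of `k(x)`. In fact `u` and `v` are
polynomials. They are integral over `k[x]`, because `F` and `G` have no common zero. The chain rule
expresses the derivatives of `u` and `v` with denominator `h`, and also with denominator `g ^ 2`;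
as `g` and `h` are coprime, all iterated partial derivatives of `u` and `v` are integral over `k[x]`
as well. Once the relation is made weighted homogeneous, `u` and `v` are eigenvectors of the Euler
derivation. Each partial derivative lowers the eigenvalue, an integral eigenvector of eigenvalue
`≤ 0` is a constant, and Euler's formula recovers an eigenvector of positive eigenvalue from its
partial derivatives. So `f` is a value of `F` at polynomials, but `F` is a product of linear forms
and such a value is never irreducible.
-/

namespace IitakaABC

section IcosahedralForms

variable {R S : Type*} [CommRing R] [CommRing S]

/-- Klein's icosahedral invariant of degree 12, vanishing at the vertices of the icosahedron. -/
def vertexForm (u v : R) : R := u * v * (u ^ 10 + 11 * u ^ 5 * v ^ 5 - v ^ 10)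

/-- Klein's icosahedral invariant of degree 20, vanishing at the centres of the faces. -/
def faceForm (u v : R) : R :=
  -(u ^ 20 + v ^ 20) + 228 * (u ^ 15 * v ^ 5 - u ^ 5 * v ^ 15) - 494 * (u ^ 10 * v ^ 10)

/-- Klein's icosahedral invariant of degree 30, vanishing at the midpoints of the edges. -/
def edgeForm (u v : R) : R :=
  u ^ 30 + v ^ 30 + 522 * (u ^ 25 * v ^ 5 - u ^ 5 * v ^ 25)
    - 10005 * (u ^ 20 * v ^ 10 + u ^ 10 * v ^ 20)

/-- The partial derivative of `vertexForm` in its second argument. -/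
def vertexPartial (u v : R) : R :=
  u * (u ^ 10 + 11 * u ^ 5 * v ^ 5 - v ^ 10) + u * v * (55 * u ^ 5 * v ^ 4 - 10 * v ^ 9)

/-- The partial derivative of `faceForm` in its second argument. -/
def facePartial (u v : R) : R :=
  -(20 * v ^ 19) + 228 * (5 * u ^ 15 * v ^ 4 - 15 * u ^ 5 * v ^ 14) - 4940 * (u ^ 10 * v ^ 9)

/-- The partial derivative of `edgeForm` in its second argument. -/
def edgePartial (u v : R) : R :=
  30 * v ^ 29 + 522 * (5 * u ^ 25 * v ^ 4 - 25 * u ^ 5 * v ^ 24)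
    - 10005 * (10 * u ^ 20 * v ^ 9 + 20 * u ^ 10 * v ^ 19)

theorem edgeForm_sq_add_faceForm_cube (u v : R) :
    edgeForm u v ^ 2 + faceForm u v ^ 3 = 1728 * vertexForm u v ^ 5 := by
  unfold edgeForm faceForm vertexForm
  ring

theorem vertexForm_rotate (u v : R) : vertexForm v (-u) = vertexForm u v := by
  unfold vertexForm
  ring

theorem faceForm_rotate (u v : R) : faceForm v (-u) = faceForm u v := by
  unfold faceForm
  ring

theorem edgeForm_rotate (u v : R) : edgeForm v (-u) = edgeForm u v := by
  unfold edgeForm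
  ring

theorem vertexForm_mul_mul (u v t : R) :
    vertexForm (u * t) (v * t) = vertexForm u v * t ^ 12 := by
  unfold vertexForm
  ring

theorem faceForm_mul_mul (u v t : R) : faceForm (u * t) (v * t) = faceForm u v * t ^ 20 := by
  unfold faceForm
  ring

theorem edgeForm_mul_mul (u v t : R) : edgeForm (u * t) (v * t) = edgeForm u v * t ^ 30 := by
  unfold edgeForm
  ring

theorem map_vertexForm (φ : R →+* S) (u v : R) :
    φ (vertexForm u v) = vertexForm (φ u) (φ v) := by
  simp [vertexForm, map_ofNat]

theorem map_faceForm (φ : R →+* S) (u v : R) : φ (faceForm u v) = faceForm (φ u) (φ v) := by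
  simp [faceForm, map_ofNat]

theorem map_vertexPartial (φ : R →+* S) (u v : R) :
    φ (vertexPartial u v) = vertexPartial (φ u) (φ v) := by
  simp [vertexPartial, map_ofNat]

theorem map_facePartial (φ : R →+* S) (u v : R) :
    φ (facePartial u v) = facePartial (φ u) (φ v) := by
  simp [facePartial, map_ofNat]

theorem map_edgePartial (φ : R →+* S) (u v : R) :
    φ (edgePartial u v) = edgePartial (φ u) (φ v) := by
  simp [edgePartial, map_ofNat]

/-- Euler's identity for both forms, with the first partial derivatives eliminated. -/
theorem vertexForm_mul_facePartial_sub (u v : R) :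
    12 * vertexForm u v * facePartial u v - 20 * faceForm u v * vertexPartial u v =
      20 * edgeForm u v * u := by
  unfold vertexForm facePartial faceForm vertexPartial edgeForm
  ring

end IcosahedralForms

section IcosahedralDerivations

variable {A B : Type*} [CommRing A] [CommRing B] [Algebra A B]

theorem edgeForm_mul_derivation (d : Derivation A B B) (u v : B) :
    20 * edgeForm u v * d u =
      facePartial u v * d (vertexForm u v) - vertexPartial u v * d (faceForm u v) := by
  have d_natCast (n : ℕ) [n.AtLeastTwo] : d ofNat(n) = 0 := by exact_mod_cast d.map_natCast n
  unfold edgeForm facePartial vertexForm vertexPartial faceForm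
  simp only [map_add, map_sub, map_neg, Derivation.leibniz, Derivation.leibniz_pow, smul_eq_mul,
    nsmul_eq_mul, d_natCast]
  push_cast
  ring

theorem faceForm_sq_mul_derivation (d : Derivation A B B) (u v : B) :
    30 * faceForm u v ^ 2 * d u =
      vertexPartial u v * d (edgeForm u v) - edgePartial u v * d (vertexForm u v) := by
  have d_natCast (n : ℕ) [n.AtLeastTwo] : d ofNat(n) = 0 := by exact_mod_cast d.map_natCast n
  unfold edgeForm edgePartial vertexForm vertexPartial faceForm
  simp only [map_add, map_sub, Derivation.leibniz, Derivation.leibniz_pow, smul_eq_mul,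
    nsmul_eq_mul, d_natCast]
  push_cast
  ring

end IcosahedralDerivations

section IcosahedralQuotient

variable {K : Type*} [Field K]

theorem vertexForm_one_ne_zero_of_faceForm_one_eq_zero [CharZero K] {r : K}
    (hG : faceForm r 1 = 0) : vertexForm r 1 ≠ 0 := by
  intro hF
  unfold vertexForm at hF
  unfold faceForm at hG
  obtain rfl | hp : r = 0 ∨ (r ^ 5) ^ 2 + 11 * r ^ 5 - 1 = 0 := by
    refine (mul_eq_zero.mp hF).imp (by simp) fun h ↦ ?_
    linear_combination h
  · norm_num at hG
  have hq : -((r ^ 5) ^ 4 + 1) + 228 * ((r ^ 5) ^ 3 - r ^ 5) - 494 * (r ^ 5) ^ 2 = 0 := by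
    linear_combination hG
  generalize r ^ 5 = p at hp hq
  have hp_inv : 11 * p = 1 := by
    apply mul_left_cancel₀ (show (3125 : K) ≠ 0 by norm_num)
    linear_combination hq - (-p ^ 2 + 239 * p - 3124) * hp
  have hp_zero : p = 0 := pow_eq_zero_iff two_ne_zero |>.mp (by linear_combination hp - hp_inv)
  simp [hp_zero] at hp_inv

theorem exists_pow_eq_of_pow_five_eq [IsAlgClosed K] {a b c : K} (hc : c ≠ 0)
    (hab : a ^ 5 = b ^ 3) (hac : a ^ 5 = c ^ 2) : ∃ t, t ^ 12 = a ∧ t ^ 20 = b ∧ t ^ 30 = c := by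
  obtain ⟨t, ht⟩ := IsAlgClosed.exists_pow_nat_eq (a * b / c) (n := 2) two_pos
  have ht_mul : t ^ 2 * c = a * b := by rw [ht]; field_simp
  refine ⟨t, mul_right_cancel₀ (pow_ne_zero 6 hc) ?_, mul_right_cancel₀ (pow_ne_zero 10 hc) ?_,
    mul_right_cancel₀ (pow_ne_zero 15 hc) ?_⟩
  · calc t ^ 12 * c ^ 6 = (t ^ 2 * c) ^ 6 := by ring
      _ = a ^ 6 * (b ^ 3) ^ 2 := by rw [ht_mul]; ring
      _ = a * (a ^ 5) ^ 3 := by rw [← hab]; ring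
      _ = a * c ^ 6 := by rw [hac]; ring
  · calc t ^ 20 * c ^ 10 = (t ^ 2 * c) ^ 10 := by ring
      _ = a ^ 10 * (b ^ 3) ^ 3 * b := by rw [ht_mul]; ring
      _ = b * (a ^ 5) ^ 5 := by rw [← hab]; ring
      _ = b * c ^ 10 := by rw [hac]; ring
  · calc t ^ 30 * c ^ 15 = (t ^ 2 * c) ^ 15 := by ring
      _ = a ^ 15 * (b ^ 3) ^ 5 := by rw [ht_mul]; ring
      _ = (a ^ 5) ^ 8 := by rw [← hab]; ring
      _ = c * c ^ 15 := by rw [hac]; ring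

open Polynomial in
theorem exists_faceForm_cube_mul_eq [IsAlgClosed K] [CharZero K] {a : K} (ha : a ≠ 0) (b : K) :
    ∃ r : K, faceForm r 1 ^ 3 * a = b * vertexForm r 1 ^ 5 := by
  let p : K[X] := (-(X ^ 20 + 1) + 228 * (X ^ 15 - X ^ 5) - 494 * X ^ 10) ^ 3 * C a -
    C b * (X * (X ^ 10 + 11 * X ^ 5 - 1)) ^ 5
  have natDegree_p : p.natDegree = 60 := by
    simp only [p]
    compute_degree!
    simp [ha, coeff_one]
  obtain ⟨r, hr⟩ := IsAlgClosed.exists_root p fun h ↦ by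
    simp [natDegree_eq_of_degree_eq_some h] at natDegree_p
  refine ⟨r, ?_⟩
  simp only [p, IsRoot.def, eval_sub, eval_mul, eval_pow, eval_add, eval_neg, eval_X, eval_one,
    eval_C, eval_ofNat] at hr
  unfold faceForm vertexForm
  linear_combination hr

theorem exists_icosahedralForms_eq [IsAlgClosed K] [CharZero K] {f g h : K} (hf : f ≠ 0)
    (hg : g ≠ 0) (hh : h ≠ 0) (hrel : h ^ 2 + g ^ 3 = 1728 * f ^ 5) :
    ∃ u v, vertexForm u v = f ∧ faceForm u v = g ∧ edgeForm u v = h := by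
  obtain ⟨r, hr⟩ := exists_faceForm_cube_mul_eq (pow_ne_zero 5 hf) (g ^ 3)
  have hr_edge : edgeForm r 1 ^ 2 * f ^ 5 = h ^ 2 * vertexForm r 1 ^ 5 := by
    linear_combination f ^ 5 * edgeForm_sq_add_faceForm_cube r 1 - hr - vertexForm r 1 ^ 5 * hrel
  have hF : vertexForm r 1 ≠ 0 := fun hF ↦
    vertexForm_one_ne_zero_of_faceForm_one_eq_zero (by simpa [hF, hf] using hr) hF
  have hG : faceForm r 1 ≠ 0 := fun hG ↦ by simp [hG, hg, hF] at hr
  have hH : edgeForm r 1 ≠ 0 := fun hH ↦ by simp [hH, hh, hF] at hr_edge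
  obtain ⟨t, htF, htG, htH⟩ := exists_pow_eq_of_pow_five_eq (a := f / vertexForm r 1)
    (b := g / faceForm r 1) (c := h / edgeForm r 1) (div_ne_zero hh hH)
    (by field_simp; linear_combination hr) (by field_simp; linear_combination hr_edge)
  refine ⟨r * t, 1 * t, ?_, ?_, ?_⟩
  · rw [vertexForm_mul_mul, htF, mul_div_cancel₀ _ hF]
  · rw [faceForm_mul_mul, htG, mul_div_cancel₀ _ hG]
  · rw [edgeForm_mul_mul, htH, mul_div_cancel₀ _ hH]

end IcosahedralQuotient

section Valuations

open IsLocalRing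

variable {K : Type*} [Field K]

theorem isIntegral_of_forall_valuationSubring {A : Type*} [CommRing A] [Algebra A K] {x : K}
    (h : ∀ V : ValuationSubring K, (∀ a, algebraMap A K a ∈ V) → x ∈ V) : IsIntegral A x := by
  by_contra hx
  have : IsIntegrallyClosedIn (integralClosure A K).toSubring K :=
    inferInstanceAs (IsIntegrallyClosedIn (integralClosure A K) K)
  obtain ⟨V, hV, hxV⟩ := Subring.exists_le_valuationSubring_of_isIntegrallyClosedIn
    (R := (integralClosure A K).toSubring) hx
  exact hxV (h V fun a ↦ hV (algebraMap_mem (integralClosure A K) a))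

variable (V : ValuationSubring K) [CharZero (ResidueField V)] {u v : K}

theorem mem_valuationSubring_of_forms_mul {t : K} (ht : t ∈ V)
    (hF : vertexForm (t * v) (1 * v) ∈ V) (hG : faceForm (t * v) (1 * v) ∈ V) : v ∈ V := by
  by_contra hv
  have hv0 : v ≠ 0 := fun h ↦ hv (h ▸ zero_mem V)
  let w : V := ⟨v⁻¹, (V.mem_or_inv_mem v).resolve_left hv⟩
  have residue_w : residue V w = 0 := by
    rw [residue_eq_zero_iff, mem_maximalIdeal, mem_nonunits_iff]
    intro hw
    obtain ⟨z, hz⟩ := hw.exists_right_inv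
    have : v⁻¹ * z = 1 := congrArg Subtype.val hz
    exact hv ((inv_mul_eq_one₀ hv0).mp this ▸ z.2)
  have residue_eq_zero {x : V} {y : K} {n : ℕ} (hn : n ≠ 0) (hy : y * v ^ n ∈ V) (hxy : x = y) :
      residue V x = 0 := by
    have : x = ⟨y * v ^ n, hy⟩ * w ^ n := Subtype.ext (by simp [w, hxy, hv0])
    rw [this, map_mul, map_pow, residue_w, zero_pow hn, mul_zero]
  rw [vertexForm_mul_mul] at hF
  rw [faceForm_mul_mul] at hG
  have hF0 := residue_eq_zero (x := vertexForm ⟨t, ht⟩ 1) (by norm_num) hF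
    (map_vertexForm V.subtype _ _)
  have hG0 := residue_eq_zero (x := faceForm ⟨t, ht⟩ 1) (by norm_num) hG
    (map_faceForm V.subtype _ _)
  rw [map_vertexForm, map_one] at hF0
  rw [map_faceForm, map_one] at hG0
  exact vertexForm_one_ne_zero_of_faceForm_one_eq_zero hG0 hF0

theorem mem_valuationSubring_of_forms (hF : vertexForm u v ∈ V) (hG : faceForm u v ∈ V) :
    u ∈ V := by
  by_cases hvu : v / u ∈ V
  · obtain rfl | hu := eq_or_ne u 0
    · exact zero_mem V
    have hv : -(v / u) * -u = v := by field_simp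
    refine neg_mem_iff.mp (mem_valuationSubring_of_forms_mul V (neg_mem hvu) ?_ ?_)
    · rwa [hv, one_mul, vertexForm_rotate]
    · rwa [hv, one_mul, faceForm_rotate]
  · have hv : v ≠ 0 := fun h ↦ hvu (by simp [h])
    have huv : u / v ∈ V := inv_div v u ▸ (V.mem_or_inv_mem _).resolve_left hvu
    have hu : u / v * v = u := div_mul_cancel₀ u hv
    rw [← hu]
    exact mul_mem huv (mem_valuationSubring_of_forms_mul V huv (by rwa [hu, one_mul])
      (by rwa [hu, one_mul]))

theorem isIntegral_of_forms {A : Type*} [CommRing A] [Algebra ℚ A] [Algebra A K]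
    (hF : IsIntegral A (vertexForm u v)) (hG : IsIntegral A (faceForm u v)) : IsIntegral A u := by
  refine isIntegral_of_forall_valuationSubring fun V hV ↦ ?_
  let toV : A →+* V := (algebraMap A K).codRestrict V.toSubring hV
  have : CharZero (ResidueField V) := charZero_of_injective_ringHom
    ((residue V).comp (toV.comp (algebraMap ℚ A))).injective
  have mem_of_isIntegral {x : K} (hx : IsIntegral A x) : x ∈ V := by
    obtain ⟨y, rfl⟩ := IsIntegrallyClosed.isIntegral_iff (R := V) |>.mp
      (hx.map_of_comp_eq toV (RingHom.id K) rfl)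
    exact y.2
  exact mem_valuationSubring_of_forms V (mem_of_isIntegral hF) (mem_of_isIntegral hG)

end Valuations

section DerivationExtension

open TensorProduct

variable {k A L : Type*} [CommRing k] [CommRing A] [CommRing L] [Algebra k L] [Algebra A L]

variable (L) in
theorem exists_derivation_extending [Algebra k A] [IsScalarTower k A L]
    [Algebra.FormallyEtale A L] (d : Derivation k A A) :
    ∃ D : Derivation k L L, ∀ a, D (algebraMap A L a) = algebraMap A L (d a) := by
  let e := KaehlerDifferential.tensorKaehlerEquivOfFormallyEtale k A L
  let φ := (((Algebra.linearMap A L).compDer d).liftKaehlerDifferential).liftBaseChange L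
  refine ⟨(φ ∘ₗ e.symm.toLinearMap).compDer (KaehlerDifferential.D k L), fun a ↦ ?_⟩
  have e_symm_D : e.symm (KaehlerDifferential.D k L (algebraMap A L a)) =
      1 ⊗ₜ[A] KaehlerDifferential.D k A a :=
    KaehlerDifferential.tensorKaehlerEquivOfFormallyEtale_symm_D_algebraMap k A L a
  simp [e_symm_D, φ]

theorem derivation_eq_of_eq_on_algebraMap [Algebra.FormallyUnramified A L]
    {D₁ D₂ : Derivation k L L} (h : ∀ a, D₁ (algebraMap A L a) = D₂ (algebraMap A L a)) :
    D₁ = D₂ := by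
  let D : Derivation A L L := Derivation.mk'
    { toFun := D₁ - D₂
      map_add' := map_add (D₁ - D₂)
      map_smul' := fun a x ↦ by simp [Algebra.smul_def, h]; ring }
    (D₁ - D₂).leibniz
  have hD : D = 0 := by
    rw [← D.liftKaehlerDifferential_comp, Subsingleton.elim D.liftKaehlerDifferential 0]
    rfl
  ext x
  exact sub_eq_zero.mp (DFunLike.congr_fun hD x)

theorem sum_derivation_apply {ι : Type*} (s : Finset ι) (D : ι → Derivation k L L) (x : L) :
    (∑ i ∈ s, D i) x = ∑ i ∈ s, D i x :=
  (congrFun (map_sum Derivation.coeFnAddMonoidHom D s) x).trans (Finset.sum_apply ..)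

end DerivationExtension

section MinpolyEigen

open Polynomial Differential

variable {A L : Type*} [CommRing A] [CommRing L] [Algebra A L]

theorem deriv_coeff_minpoly_of_deriv_eq_zsmul [IsDomain A] [IsIntegrallyClosed A] [IsDomain L]
    [Module.IsTorsionFree A L] [Differential A] [Differential L] [DifferentialAlgebra A L]
    {b : L} (hb : IsIntegral A b) {m : ℤ} (hm : b′ = m • b) (j : ℕ) :
    ((minpoly A b).coeff j)′ = (m * ((minpoly A b).natDegree - j)) • (minpoly A b).coeff j := by
  set p := minpoly A b
  have p_monic : p.Monic := minpoly.monic hb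
  have p_root : aeval b p = 0 := minpoly.aeval A b
  let q : A[X] := mapCoeffs p + C (m : A) * (X * derivative p) - C (m * p.natDegree : A) * p
  have coeff_q (i : ℕ) : q.coeff i = (p.coeff i)′ - (m * (p.natDegree - i)) • p.coeff i := by
    simp only [q, coeff_sub, coeff_add, coeff_C_mul, coeff_mapCoeffs]
    cases i with
    | zero => simp
    | succ i =>
      simp only [coeff_X_mul, coeff_derivative, zsmul_eq_mul]
      push_cast
      ring
  have q_root : aeval b q = 0 := by
    have chain_rule := deriv_aeval_eq b p
    rw [p_root, map_zero, hm] at chain_rule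
    simp only [q, map_sub, map_add, map_mul, p_root, aeval_X, aeval_C, map_intCast]
    linear_combination -chain_rule + (zsmul_eq_mul b m) * aeval b (derivative p)
  have q_degree : q.degree < p.degree := by
    rw [degree_eq_natDegree p_monic.ne_zero, degree_lt_iff_coeff_zero]
    intro i hi
    rw [coeff_q]
    obtain rfl | hi := hi.eq_or_lt
    · simp [p_monic]
    · simp [coeff_eq_zero_of_natDegree_lt hi]
  have q_eq_zero : q = 0 := by
    by_contra hq
    exact (minpoly.IsIntegrallyClosed.degree_le_of_ne_zero hq q_root).not_gt q_degree
  exact sub_eq_zero.mp ((coeff_q j).symm.trans (by simp [q_eq_zero]))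

theorem isIntegral_of_coeff_minpoly_mem_range [Nontrivial A] {k : Type*} [CommRing k]
    [Algebra k A] [Algebra k L] [IsScalarTower k A L] {b : L} (hb : IsIntegral A b)
    (h : ∀ j, (minpoly A b).coeff j ∈ (algebraMap k A).range) : IsIntegral k b := by
  have lifts : minpoly A b ∈ Polynomial.lifts (algebraMap k A) :=
    (lifts_iff_coeff_lifts _).mpr h
  obtain ⟨q, hq, -, q_monic⟩ := lifts_and_degree_eq_and_monic lifts (minpoly.monic hb)
  refine ⟨q, q_monic, ?_⟩
  rw [← aeval_def, ← aeval_map_algebraMap A, hq, minpoly.aeval]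

theorem mem_bot_of_isAlgebraic {k A : Type*} [Field k] [IsAlgClosed k] [CommRing A] [IsDomain A]
    [Algebra k A] {x : A} (hx : IsAlgebraic k x) : x ∈ (⊥ : Subalgebra k A) := by
  refine Algebra.mem_bot.mpr (minpoly.mem_range_of_degree_eq_one k x ?_)
  exact IsAlgClosed.degree_eq_one_of_irreducible k (minpoly.irreducible hx.isIntegral)

end MinpolyEigen

section WeightedEuler

open MvPolynomial

variable {k τ : Type*} [CommRing k] (w : τ → ℕ)

variable (k) in
/-- The derivation `∑ i, w i * X i * ∂ᵢ` of a polynomial ring, which acts on weighted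
homogeneous polynomials of degree `d` as multiplication by `d`. -/
noncomputable def weightedEuler : Derivation k (MvPolynomial τ k) (MvPolynomial τ k) :=
  mkDerivation k fun i ↦ w i • X i

theorem weightedEuler_X (i : τ) : weightedEuler k w (X i) = w i • X i :=
  mkDerivation_X ..

theorem coeff_weightedEuler (p : MvPolynomial τ k) (s : τ →₀ ℕ) :
    coeff s (weightedEuler k w p) = Finsupp.weight w s * coeff s p := by
  classical
  have on_monomial (t : τ →₀ ℕ) (c : k) :
      weightedEuler k w (monomial t c) = Finsupp.weight w t • monomial t c := by
    simp only [weightedEuler, mkDerivation_monomial, Finsupp.weight_apply, Finsupp.sum,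
      Finset.smul_sum, Finset.sum_smul]
    refine Finset.sum_congr rfl fun i hi ↦ ?_
    have ht : t - Finsupp.single i 1 + Finsupp.single i 1 = t :=
      tsub_add_cancel_of_le <| Finsupp.single_le_iff.mpr <|
        Nat.one_le_iff_ne_zero.mpr (by simpa using hi)
    simp only [smul_eq_mul, mul_smul_comm, X, monomial_mul, ht, smul_monomial, mul_one]
    congr 1
    simp only [nsmul_eq_mul]
    push_cast
    ring
  induction p using MvPolynomial.induction_on' with
  | monomial t c =>
    rw [on_monomial, coeff_smul, coeff_monomial]
    split_ifs with h <;> simp [h]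
  | add p q hp hq => rw [map_add, coeff_add, coeff_add, hp, hq, mul_add]

theorem weightedEuler_of_isWeightedHomogeneous {w} {p : MvPolynomial τ k} {d : ℕ}
    (hp : IsWeightedHomogeneous w p d) : weightedEuler k w p = d • p := by
  ext s
  rw [coeff_weightedEuler, coeff_smul, nsmul_eq_mul]
  by_cases hs : coeff s p = 0
  · rw [hs, mul_zero, mul_zero]
  · rw [hp hs]

theorem mem_range_C_of_weightedEuler_eq {w} [IsDomain k] [CharZero k] (hw : ∀ i, w i ≠ 0)
    {m : ℤ} (hm : m ≤ 0) {p : MvPolynomial τ k} (hp : weightedEuler k w p = m • p) :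
    p ∈ (C : k →+* MvPolynomial τ k).range := by
  classical
  refine ⟨coeff 0 p, ?_⟩
  ext s
  rw [coeff_C]
  split_ifs with hs
  · rw [hs]
  have : Finsupp.NonTorsionWeight ℕ w := Finsupp.nonTorsionWeight_of ℕ w hw
  have weight_pos : 0 < Finsupp.weight w s :=
    Nat.pos_of_ne_zero fun h ↦ hs ((Finsupp.weight_eq_zero_iff_eq_zero w).mp h).symm
  have hps : (Finsupp.weight w s - m : k) * coeff s p = 0 := by
    rw [sub_mul, ← coeff_weightedEuler, hp, coeff_smul, zsmul_eq_mul, sub_self]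
  have weight_ne : (Finsupp.weight w s - m : k) ≠ 0 := by
    rw [sub_ne_zero]
    exact_mod_cast (hm.trans_lt (by exact_mod_cast weight_pos)).ne'
  exact ((mul_eq_zero.mp hps).resolve_left weight_ne).symm

end WeightedEuler

section EulerEigenvectors

open MvPolynomial Module

variable {k τ L : Type*} [Field k] [Field L] [Algebra k L] [Algebra (MvPolynomial τ k) L]
  {w : τ → ℕ} {D : τ → Derivation k L L} {E : Derivation k L L}

theorem lie_pderiv_weightedEuler (i : τ) :
    ⁅pderiv (R := k) i, weightedEuler k w⁆ = w i • pderiv i := by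
  classical
  refine derivation_ext fun j ↦ ?_
  obtain rfl | hij := eq_or_ne i j <;>
    simp_all [Derivation.commutator_apply, weightedEuler_X, pderiv_X]

theorem lie_euler [Algebra.FormallyUnramified (MvPolynomial τ k) L]
    (hD : ∀ i p, D i (algebraMap (MvPolynomial τ k) L p) = algebraMap _ L (pderiv i p))
    (hE : ∀ p, E (algebraMap (MvPolynomial τ k) L p) = algebraMap _ L (weightedEuler k w p))
    (i : τ) : ⁅D i, E⁆ = w i • D i :=
  derivation_eq_of_eq_on_algebraMap (A := MvPolynomial τ k) fun p ↦ by
    simpa [Derivation.commutator_apply, hD, hE] using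
      congrArg (algebraMap _ L) (DFunLike.congr_fun (lie_pderiv_weightedEuler (w := w) i) p)

theorem euler_apply_eq_sum [Fintype τ] [Algebra.FormallyUnramified (MvPolynomial τ k) L]
    (hD : ∀ i p, D i (algebraMap (MvPolynomial τ k) L p) = algebraMap _ L (pderiv i p))
    (hE : ∀ p, E (algebraMap (MvPolynomial τ k) L p) = algebraMap _ L (weightedEuler k w p))
    (b : L) : E b = ∑ i, w i • (algebraMap (MvPolynomial τ k) L (X i) * D i b) := by
  have polynomial_identity : weightedEuler k w = ∑ i, w i • X (R := k) i • pderiv i := by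
    classical
    refine derivation_ext fun j ↦ ?_
    simp [weightedEuler_X, Pi.single_apply, pderiv_X, sum_derivation_apply]
  have extended_identity : E = ∑ i, w i • algebraMap (MvPolynomial τ k) L (X i) • D i := by
    refine derivation_eq_of_eq_on_algebraMap (A := MvPolynomial τ k) fun p ↦ ?_
    rw [hE, polynomial_identity]
    simp [hD, sum_derivation_apply, Algebra.smul_def]
  simp [extended_identity, sum_derivation_apply, Algebra.smul_def]

variable [CharZero k] [IsAlgClosed k] [IsScalarTower k (MvPolynomial τ k) L]
  [IsTorsionFree (MvPolynomial τ k) L]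

theorem mem_range_algebraMap_of_euler_eq_nonpos (hw : ∀ i, w i ≠ 0)
    (hE : ∀ p, E (algebraMap (MvPolynomial τ k) L p) = algebraMap _ L (weightedEuler k w p))
    {b : L} (hb : IsIntegral (MvPolynomial τ k) b) {m : ℤ} (hm : m ≤ 0) (hEb : E b = m • b) :
    b ∈ (algebraMap k L).range := by
  let : Differential (MvPolynomial τ k) := ⟨(weightedEuler k w).restrictScalars ℤ⟩
  let : Differential L := ⟨E.restrictScalars ℤ⟩
  have : DifferentialAlgebra (MvPolynomial τ k) L := ⟨hE⟩
  have hbk : IsIntegral k b := isIntegral_of_coeff_minpoly_mem_range hb fun j ↦ by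
    obtain hj | hj := le_or_gt j (minpoly (MvPolynomial τ k) b).natDegree
    · exact mem_range_C_of_weightedEuler_eq hw
        (mul_nonpos_of_nonpos_of_nonneg hm (by lia))
        (deriv_coeff_minpoly_of_deriv_eq_zsmul hb hEb j)
    · exact Polynomial.coeff_eq_zero_of_natDegree_lt hj ▸ zero_mem _
  exact Algebra.mem_bot.mp (mem_bot_of_isAlgebraic hbk.isAlgebraic)

theorem mem_range_algebraMap_of_euler_eq [Finite τ]
    [Algebra.FormallyUnramified (MvPolynomial τ k) L] (hw : ∀ i, w i ≠ 0)
    (hD : ∀ i p, D i (algebraMap (MvPolynomial τ k) L p) = algebraMap _ L (pderiv i p))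
    (hE : ∀ p, E (algebraMap (MvPolynomial τ k) L p) = algebraMap _ L (weightedEuler k w p))
    {T : Set L} (hT : ∀ b ∈ T, IsIntegral (MvPolynomial τ k) b) (hDT : ∀ i, ∀ b ∈ T, D i b ∈ T)
    {b : L} (hb : b ∈ T) {m : ℤ} (hEb : E b = m • b) :
    b ∈ (algebraMap (MvPolynomial τ k) L).range := by
  cases nonempty_fintype τ
  induction hN : m.toNat using Nat.strong_induction_on generalizing m b with
  | _ N ih =>
    obtain hm | hm := le_or_gt m 0
    · obtain ⟨c, rfl⟩ := mem_range_algebraMap_of_euler_eq_nonpos hw hE (hT b hb) hm hEb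
      exact ⟨C c, (IsScalarTower.algebraMap_apply k _ L c).symm⟩
    have partial_mem_range (i : τ) : D i b ∈ (algebraMap (MvPolynomial τ k) L).range := by
      have hEDb : E (D i b) = (m - w i) • D i b := by
        have lie_apply : m • D i b - E (D i b) = w i • D i b := by
          rw [← map_zsmul, ← hEb, ← Derivation.commutator_apply, lie_euler hD hE i]
          rfl
        rw [sub_smul, natCast_zsmul, ← lie_apply, sub_sub_cancel]
      exact ih _ (by have := hw i; lia) (hDT i b hb) hEDb rfl
    choose r hr using partial_mem_range
    have hm0 : (m : L) ≠ 0 := by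
      have : CharZero L := charZero_of_injective_algebraMap (algebraMap k L).injective
      exact_mod_cast hm.ne'
    refine ⟨C (m : k)⁻¹ * ∑ i, w i • (X i * r i), ?_⟩
    calc algebraMap _ L (C (m : k)⁻¹ * ∑ i, w i • (X i * r i)) = (m : L)⁻¹ * E b := by
          rw [map_mul, ← algebraMap_eq, ← IsScalarTower.algebraMap_apply, map_inv₀, map_intCast,
            euler_apply_eq_sum hD hE b]
          simp [hr]
      _ = b := by rw [hEb, zsmul_eq_mul, inv_mul_cancel_left₀ hm0]

end EulerEigenvectors

section CoprimeDenominators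

variable {A K L : Type*} [CommRing A] [Field K] [Algebra A K] [IsFractionRing A K]

theorem mem_range_of_isRelPrime_mul_mem_range [DecompositionMonoid A] {g h : A} (hg : g ≠ 0)
    (hgh : IsRelPrime g h) {x : K} (hgx : x * algebraMap A K g ∈ (algebraMap A K).range)
    (hhx : x * algebraMap A K h ∈ (algebraMap A K).range) : x ∈ (algebraMap A K).range := by
  obtain ⟨a, ha⟩ := hgx
  obtain ⟨b, hb⟩ := hhx
  have cross : a * h = b * g := by
    apply IsFractionRing.injective A K
    rw [map_mul, map_mul, ha, hb]
    ring
  obtain ⟨c, rfl⟩ : g ∣ a := hgh.dvd_of_dvd_mul_right ⟨b, by rw [cross, mul_comm]⟩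
  refine ⟨c, mul_right_cancel₀ (b := algebraMap A K g) (by simpa using hg) ?_⟩
  rw [← ha, map_mul, mul_comm]

variable [Field L] [Algebra A L]

theorem exists_isIntegral_pow_mul_of_mem_adjoin {S : Set L} (hS : ∀ s ∈ S, IsIntegral A s)
    {a : A} {x : L} (hx : x ∈ Algebra.adjoin A (insert (algebraMap A L a)⁻¹ S)) :
    ∃ N, IsIntegral A (algebraMap A L (a ^ N) * x) := by
  have integral_pow (N : ℕ) : IsIntegral A (algebraMap A L (a ^ N)) := isIntegral_algebraMap
  induction hx using Algebra.adjoin_induction with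
  | mem s hs =>
    obtain rfl | hs := hs
    · refine ⟨1, ?_⟩
      by_cases ha : algebraMap A L a = 0
      · simp [ha, isIntegral_zero]
      · simp [ha, isIntegral_one]
    · exact ⟨0, by simpa using hS s hs⟩
  | algebraMap r => exact ⟨0, by simpa using isIntegral_algebraMap⟩
  | add x y _ _ hx hy =>
    obtain ⟨N, hN⟩ := hx
    obtain ⟨M, hM⟩ := hy
    have expand : algebraMap A L (a ^ (N + M)) * (x + y) =
        algebraMap A L (a ^ M) * (algebraMap A L (a ^ N) * x) +
          algebraMap A L (a ^ N) * (algebraMap A L (a ^ M) * y) := by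
      rw [pow_add, map_mul]
      ring
    exact ⟨N + M, expand ▸ ((integral_pow M).mul hN).add ((integral_pow N).mul hM)⟩
  | mul x y _ _ hx hy =>
    obtain ⟨N, hN⟩ := hx
    obtain ⟨M, hM⟩ := hy
    exact ⟨N + M, by rw [pow_add, map_mul, mul_mul_mul_comm]; exact hN.mul hM⟩

variable [IsDomain A]

variable (K) in
theorem coeff_minpoly_mul_pow_mem_range [IsIntegrallyClosed A] [Algebra K L] [IsScalarTower A K L]
    {b : L} (hb : IsIntegral K b) {a : A} (ha : a ≠ 0) (hab : IsIntegral A (algebraMap A L a * b))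
    (i : ℕ) : (minpoly K b).coeff i * algebraMap A K (a ^ ((minpoly K b).natDegree - i)) ∈
      (algebraMap A K).range := by
  rw [IsScalarTower.algebraMap_apply A K L, ← Algebra.smul_def] at hab
  have minpoly_smul :=
    IsIntegrallyClosed.minpoly_smul (r := algebraMap A K a) (by simpa using ha) hb
  rw [minpoly.isIntegrallyClosed_eq_field_fractions' K hab] at minpoly_smul
  refine ⟨(minpoly A (algebraMap A K a • b)).coeff i, ?_⟩
  rw [map_pow, ← Polynomial.coeff_scaleRoots, ← minpoly_smul, Polynomial.coeff_map]

variable (K) in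
theorem isIntegral_of_isRelPrime_mul [UniqueFactorizationMonoid A] [Algebra K L]
    [IsScalarTower A K L] {b : L} (hb : IsIntegral K b) {g h : A} (hg : g ≠ 0) (hh : h ≠ 0)
    (hgh : IsRelPrime g h) (hgb : IsIntegral A (algebraMap A L g * b))
    (hhb : IsIntegral A (algebraMap A L h * b)) : IsIntegral A b :=
  isIntegral_of_coeff_minpoly_mem_range hb fun i ↦
    mem_range_of_isRelPrime_mul_mem_range (pow_ne_zero _ hg) hgh.pow
      (coeff_minpoly_mul_pow_mem_range K hb hg hgb i)
      (coeff_minpoly_mul_pow_mem_range K hb hh hhb i)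

variable (K) in
theorem isIntegral_of_mem_adjoin_inf [UniqueFactorizationMonoid A] [Algebra K L]
    [IsScalarTower A K L] [Algebra.IsAlgebraic K L] {S : Set L} (hS : ∀ s ∈ S, IsIntegral A s)
    {g h : A} (hg : g ≠ 0) (hh : h ≠ 0) (hgh : IsRelPrime g h) {x : L}
    (hx : x ∈ Algebra.adjoin A (insert (algebraMap A L g)⁻¹ S) ⊓
      Algebra.adjoin A (insert (algebraMap A L h)⁻¹ S)) : IsIntegral A x := by
  obtain ⟨N, hN⟩ := exists_isIntegral_pow_mul_of_mem_adjoin hS hx.1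
  obtain ⟨M, hM⟩ := exists_isIntegral_pow_mul_of_mem_adjoin hS hx.2
  exact isIntegral_of_isRelPrime_mul K (Algebra.IsIntegral.isIntegral x) (pow_ne_zero N hg)
    (pow_ne_zero M hh) hgh.pow hN hM

end CoprimeDenominators

section DerivationStability

variable {k A L : Type*} [CommRing k] [CommRing A] [Field L] [Algebra k L] [Algebra A L]
  {d : Derivation k L L}

theorem derivation_mem_adjoin_insert_inv {S : Set L} {a : A}
    (hA : ∀ r, d (algebraMap A L r) ∈ (algebraMap A L).range)
    (hS : ∀ s ∈ S, d s ∈ Algebra.adjoin A (insert (algebraMap A L a)⁻¹ S)) {x : L}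
    (hx : x ∈ Algebra.adjoin A (insert (algebraMap A L a)⁻¹ S)) :
    d x ∈ Algebra.adjoin A (insert (algebraMap A L a)⁻¹ S) := by
  have d_algebraMap_mem (r : A) :
      d (algebraMap A L r) ∈ Algebra.adjoin A (insert (algebraMap A L a)⁻¹ S) := by
    obtain ⟨r', hr'⟩ := hA r
    exact hr' ▸ algebraMap_mem _ r'
  induction hx using Algebra.adjoin_induction with
  | mem s hs =>
    obtain rfl | hs := hs
    · have inv_mem := Algebra.subset_adjoin (R := A) (Set.mem_insert (algebraMap A L a)⁻¹ S)
      rw [Derivation.leibniz_inv, smul_eq_mul, neg_mul]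
      exact neg_mem (mul_mem (pow_mem inv_mem 2) (d_algebraMap_mem a))
    · exact hS s hs
  | algebraMap r => exact d_algebraMap_mem r
  | add x y _ _ hx hy => exact map_add d x y ▸ add_mem hx hy
  | mul x y hx hy hdx hdy =>
    rw [Derivation.leibniz, smul_eq_mul, smul_eq_mul]
    exact add_mem (mul_mem hx hdy) (mul_mem hy hdx)

variable {B : Subalgebra A L} {u v : L}

theorem vertexPartial_mem (hu : u ∈ B) (hv : v ∈ B) : vertexPartial u v ∈ B :=
  map_vertexPartial B.val.toRingHom ⟨u, hu⟩ ⟨v, hv⟩ ▸ Subtype.prop _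

variable [Algebra ℚ A]

theorem mem_of_natCast_mul_mem {n : ℕ} (hn : n ≠ 0) {x : L} (hx : n * x ∈ B) : x ∈ B := by
  let φ : ℚ →+* L := (algebraMap A L).comp (algebraMap ℚ A)
  have : CharZero L := charZero_of_injective_ringHom φ.injective
  have inv_mem : φ (n : ℚ)⁻¹ ∈ B := algebraMap_mem B _
  rw [map_inv₀, map_natCast] at inv_mem
  simpa [hn] using mul_mem inv_mem hx

theorem derivation_mem_of_inv_edgeForm_mem (hu : u ∈ B) (hv : v ∈ B)
    (hF : d (vertexForm u v) ∈ B) (hG : d (faceForm u v) ∈ B) (hH : edgeForm u v ≠ 0)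
    (hH_inv : (edgeForm u v)⁻¹ ∈ B) : d u ∈ B := by
  have facePartial_mem : facePartial u v ∈ B :=
    map_facePartial B.val.toRingHom ⟨u, hu⟩ ⟨v, hv⟩ ▸ Subtype.prop _
  refine mem_of_natCast_mul_mem (n := 20) (by norm_num) ?_
  have du_eq : 20 * d u = (edgeForm u v)⁻¹ *
      (facePartial u v * d (vertexForm u v) - vertexPartial u v * d (faceForm u v)) := by
    rw [← edgeForm_mul_derivation]
    field_simp
  rw [Nat.cast_ofNat, du_eq]
  exact mul_mem hH_inv
    (sub_mem (mul_mem facePartial_mem hF) (mul_mem (vertexPartial_mem hu hv) hG))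

theorem derivation_mem_of_inv_faceForm_mem (hu : u ∈ B) (hv : v ∈ B)
    (hF : d (vertexForm u v) ∈ B) (hH : d (edgeForm u v) ∈ B) (hG : faceForm u v ≠ 0)
    (hG_inv : (faceForm u v)⁻¹ ∈ B) : d u ∈ B := by
  have edgePartial_mem : edgePartial u v ∈ B :=
    map_edgePartial B.val.toRingHom ⟨u, hu⟩ ⟨v, hv⟩ ▸ Subtype.prop _
  refine mem_of_natCast_mul_mem (n := 30) (by norm_num) ?_
  have du_eq : 30 * d u = (faceForm u v)⁻¹ ^ 2 *
      (vertexPartial u v * d (edgeForm u v) - edgePartial u v * d (vertexForm u v)) := by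
    rw [← faceForm_sq_mul_derivation]
    field_simp
  rw [Nat.cast_ofNat, du_eq]
  exact mul_mem (pow_mem hG_inv 2)
    (sub_mem (mul_mem (vertexPartial_mem hu hv) hH) (mul_mem edgePartial_mem hF))

end DerivationStability

section WeightedHomogeneousKlein

open MvPolynomial

theorem derivation_mem_adjoin_inf {k A L : Type*} [CommRing k] [CommRing A] [Algebra ℚ A] [Field L]
    [Algebra k L] [Algebra A L] {d : Derivation k L L}
    (hA : ∀ r, d (algebraMap A L r) ∈ (algebraMap A L).range) {f g h : A} {u v : L}
    (hg0 : algebraMap A L g ≠ 0) (hh0 : algebraMap A L h ≠ 0)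
    (hF : vertexForm u v = algebraMap A L f) (hG : faceForm u v = algebraMap A L g)
    (hH : edgeForm u v = algebraMap A L h) {x : L}
    (hx : x ∈ Algebra.adjoin A {(algebraMap A L g)⁻¹, u, v} ⊓
      Algebra.adjoin A {(algebraMap A L h)⁻¹, u, v}) :
    d x ∈ Algebra.adjoin A {(algebraMap A L g)⁻¹, u, v} ⊓
      Algebra.adjoin A {(algebraMap A L h)⁻¹, u, v} := by
  have d_mem (B : Subalgebra A L) (r : A) : d (algebraMap A L r) ∈ B := by
    obtain ⟨r', hr'⟩ := hA r
    exact hr' ▸ algebraMap_mem B r'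
  refine ⟨derivation_mem_adjoin_insert_inv hA ?_ hx.1,
    derivation_mem_adjoin_insert_inv hA ?_ hx.2⟩
  · set B := Algebra.adjoin A {(algebraMap A L g)⁻¹, u, v}
    have inv_mem : (algebraMap A L g)⁻¹ ∈ B := Algebra.subset_adjoin (by simp)
    have hu : u ∈ B := Algebra.subset_adjoin (by simp)
    have hv : v ∈ B := Algebra.subset_adjoin (by simp)
    rintro s (rfl | rfl)
    · apply derivation_mem_of_inv_faceForm_mem hu hv <;> simp [*]
    · apply derivation_mem_of_inv_faceForm_mem hv (neg_mem hu) <;>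
        simp [vertexForm_rotate, faceForm_rotate, edgeForm_rotate, *]
  · set B := Algebra.adjoin A {(algebraMap A L h)⁻¹, u, v}
    have inv_mem : (algebraMap A L h)⁻¹ ∈ B := Algebra.subset_adjoin (by simp)
    have hu : u ∈ B := Algebra.subset_adjoin (by simp)
    have hv : v ∈ B := Algebra.subset_adjoin (by simp)
    rintro s (rfl | rfl)
    · apply derivation_mem_of_inv_edgeForm_mem hu hv <;> simp [*]
    · apply derivation_mem_of_inv_edgeForm_mem hv (neg_mem hu) <;>
        simp [vertexForm_rotate, faceForm_rotate, edgeForm_rotate, *]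

variable (A K L : Type*) [CommRing A] [Field K] [Algebra A K] [IsFractionRing A K] [Field L]
  [Algebra A L] [Algebra K L] [IsScalarTower A K L] in
theorem formallyEtale_of_isFractionRing [Algebra.IsSeparable K L] : Algebra.FormallyEtale A L :=
  have : Algebra.FormallyEtale A K := .of_isLocalization (nonZeroDivisors A)
  have : Algebra.FormallyEtale K L := .of_isSeparable K L
  .comp A K L

variable {k L : Type*} [Field k] [CharZero k] [Field L] [Algebra k L]

theorem derivation_eq_zsmul_of_forms {d : Derivation k L L} {u v : L} {m : ℤ}
    (hF : d (vertexForm u v) = (12 * m) • vertexForm u v)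
    (hG : d (faceForm u v) = (20 * m) • faceForm u v) (hH : edgeForm u v ≠ 0) : d u = m • u := by
  have : CharZero L := charZero_of_injective_algebraMap (algebraMap k L).injective
  have H_mul_du := edgeForm_mul_derivation d u v
  rw [hF, hG] at H_mul_du
  refine mul_left_cancel₀ (mul_ne_zero (by norm_num : (20 : L) ≠ 0) hH) ?_
  simp only [zsmul_eq_mul] at H_mul_du ⊢
  push_cast at H_mul_du
  linear_combination H_mul_du + (m : L) * vertexForm_mul_facePartial_sub u v

variable {τ : Type*} [IsAlgClosed k] [Finite τ] {w : τ → ℕ} {f g h : MvPolynomial τ k} {m : ℕ}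

theorem mem_range_algebraMap_of_forms {K : Type*} [Field K] [Algebra (MvPolynomial τ k) K]
    [IsFractionRing (MvPolynomial τ k) K] [Algebra (MvPolynomial τ k) L]
    [IsScalarTower k (MvPolynomial τ k) L] [Algebra K L]
    [IsScalarTower (MvPolynomial τ k) K L] [Algebra.IsAlgebraic K L]
    (hw : ∀ i, w i ≠ 0) (hf : IsWeightedHomogeneous w f (12 * m))
    (hg : IsWeightedHomogeneous w g (20 * m)) (hg0 : g ≠ 0) (hh0 : h ≠ 0)
    (hgh : IsRelPrime g h) {u v : L} (hF : vertexForm u v = algebraMap _ L f)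
    (hG : faceForm u v = algebraMap _ L g) (hH : edgeForm u v = algebraMap _ L h) :
    u ∈ (algebraMap (MvPolynomial τ k) L).range := by
  have : Module.IsTorsionFree (MvPolynomial τ k) L := .trans_faithfulSMul _ K _
  have : CharZero K :=
    charZero_of_injective_algebraMap (IsFractionRing.injective (MvPolynomial τ k) K)
  have : Algebra.FormallyEtale (MvPolynomial τ k) L := formallyEtale_of_isFractionRing _ K L
  have ne_zero_of_ne {p : MvPolynomial τ k} (hp : p ≠ 0) : algebraMap _ L p ≠ 0 :=
    (map_ne_zero_iff _ (FaithfulSMul.algebraMap_injective _ L)).mpr hp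
  choose D hD using fun i ↦ exists_derivation_extending L (pderiv (R := k) (σ := τ) i)
  obtain ⟨E, hE⟩ := exists_derivation_extending L (weightedEuler k w)
  have u_integral : IsIntegral (MvPolynomial τ k) u :=
    isIntegral_of_forms (hF ▸ isIntegral_algebraMap) (hG ▸ isIntegral_algebraMap)
  have v_integral : IsIntegral (MvPolynomial τ k) v := by
    refine isIntegral_of_forms (v := -u) ?_ ?_
    · exact vertexForm_rotate u v ▸ hF ▸ isIntegral_algebraMap
    · exact faceForm_rotate u v ▸ hG ▸ isIntegral_algebraMap
  have E_u : E u = (m : ℤ) • u := by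
    refine derivation_eq_zsmul_of_forms (v := v) ?_ ?_ (hH ▸ ne_zero_of_ne hh0)
    · rw [hF, hE, weightedEuler_of_isWeightedHomogeneous hf, map_nsmul,
        ← natCast_zsmul, Nat.cast_mul, Nat.cast_ofNat]
    · rw [hG, hE, weightedEuler_of_isWeightedHomogeneous hg, map_nsmul,
        ← natCast_zsmul, Nat.cast_mul, Nat.cast_ofNat]
  refine mem_range_algebraMap_of_euler_eq hw hD hE
    (fun b hb ↦ isIntegral_of_mem_adjoin_inf K (S := {u, v}) ?_ hg0 hh0 hgh hb)
    (fun i b hb ↦ derivation_mem_adjoin_inf (fun r ↦ ⟨_, (hD i r).symm⟩) (ne_zero_of_ne hg0)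
      (ne_zero_of_ne hh0) hF hG hH hb) ?_ E_u
  · rintro s (rfl | rfl) <;> assumption
  · exact ⟨Algebra.subset_adjoin (by simp), Algebra.subset_adjoin (by simp)⟩

theorem exists_vertexForm_eq_of_isWeightedHomogeneous (hw : ∀ i, w i ≠ 0)
    (hf : IsWeightedHomogeneous w f (12 * m)) (hg : IsWeightedHomogeneous w g (20 * m))
    (hf0 : f ≠ 0) (hg0 : g ≠ 0) (hh0 : h ≠ 0) (hgh : IsRelPrime g h)
    (hrel : h ^ 2 + g ^ 3 = 1728 * f ^ 5) : ∃ u v, vertexForm u v = f := by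
  let K := FractionRing (MvPolynomial τ k)
  let L := AlgebraicClosure K
  have algebraMap_injective : Function.Injective (algebraMap (MvPolynomial τ k) L) := by
    rw [IsScalarTower.algebraMap_eq _ K L]
    exact (algebraMap K L).injective.comp (IsFractionRing.injective _ K)
  have ne_zero {p : MvPolynomial τ k} (hp : p ≠ 0) : algebraMap _ L p ≠ 0 :=
    (map_ne_zero_iff _ algebraMap_injective).mpr hp
  obtain ⟨u, v, hF, hG, hH⟩ := exists_icosahedralForms_eq (ne_zero hf0) (ne_zero hg0) (ne_zero hh0)
    (by simpa [map_ofNat] using congrArg (algebraMap _ L) hrel)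
  obtain ⟨u', rfl⟩ := mem_range_algebraMap_of_forms (K := K) hw hf hg hg0 hh0 hgh hF hG hH
  obtain ⟨v', rfl⟩ := mem_range_algebraMap_of_forms (K := K) hw hf hg hg0 hh0 hgh
    ((vertexForm_rotate _ v).trans hF) ((faceForm_rotate _ v).trans hG)
    ((edgeForm_rotate _ v).trans hH)
  exact ⟨u', v', algebraMap_injective ((map_vertexForm _ u' v').trans hF)⟩

end WeightedHomogeneousKlein

theorem dvd_mul_of_isRelPrime {M : Type*} [CommMonoid M] [DecompositionMonoid M]
    {a b x y q : M} (hxy : IsRelPrime x y) (hqx : q ∣ a * x) (hqy : q ∣ b * y) : q ∣ a * b := by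
  obtain ⟨r, s, hra, hsx, rfl⟩ := exists_dvd_and_dvd_of_dvd_mul hqx
  exact mul_dvd_mul hra ((hxy.of_dvd_left hsx).dvd_of_dvd_mul_right (dvd_of_mul_left_dvd hqy))

section Homogenization

open MvPolynomial

variable {k σ : Type*}

section CommRing

variable [CommRing k]

theorem aeval_mul_of_isHomogeneous {S : Type*} [CommRing S] [Algebra k S] {p : MvPolynomial σ k}
    {j : ℕ} (hp : p.IsHomogeneous j) (c : S) (x : σ → S) :
    aeval (fun i ↦ c * x i) p = c ^ j * aeval x p := by
  rw [aeval_def, aeval_def, eval₂_eq, eval₂_eq, Finset.mul_sum]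
  refine Finset.sum_congr rfl fun m hm ↦ ?_
  simp only [mul_pow, Finset.prod_mul_distrib, Finset.prod_pow_eq_pow_sum]
  rw [← hp.degree_eq_sum_deg_support hm]
  ring

theorem isWeightedHomogeneous_rename {τ : Type*} {e : σ → τ} {w : τ → ℕ} {c : ℕ}
    (hw : ∀ i, w (e i) = c) {p : MvPolynomial σ k} {j : ℕ} (hp : p.IsHomogeneous j) :
    IsWeightedHomogeneous w (rename e p) (c * j) := by
  intro s hs
  obtain ⟨m, rfl, hm⟩ := coeff_rename_ne_zero e p s hs
  have weight_eq_smul : Finsupp.weight w (m.mapDomain e) = c * Finsupp.weight 1 m := by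
    rw [Finsupp.weight_apply, Finsupp.weight_apply,
      Finsupp.sum_mapDomain_index (by simp) (by simp [add_mul]), Finsupp.mul_sum]
    simp [hw, mul_comm]
  rw [weight_eq_smul, hp hm]

/-- The weights `1` for the homogenizing variable `none` and `w` for the original variables. -/
def homogenizationWeight (w : ℕ) : Option σ → ℕ := fun i ↦ i.elim 1 fun _ ↦ w

/-- The polynomial `s ^ d * p (x / s ^ w)`, where `s` is the additional variable `X none`.
It is only meaningful for `w * p.totalDegree ≤ d`, since `d - w * j` is a truncated subtraction. -/
noncomputable def homogenization (w d : ℕ) (p : MvPolynomial σ k) : MvPolynomial (Option σ) k :=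
  ∑ j ∈ Finset.range (p.totalDegree + 1),
    X none ^ (d - w * j) * rename some (homogeneousComponent j p)

variable {w d : ℕ} {p : MvPolynomial σ k}

theorem isWeightedHomogeneous_homogenization (hd : w * p.totalDegree ≤ d) :
    IsWeightedHomogeneous (homogenizationWeight w) (homogenization w d p) d := by
  refine .sum _ _ _ fun j hj ↦ ?_
  have hj_le : w * j ≤ d :=
    (Nat.mul_le_mul_left w (Nat.lt_succ_iff.mp (Finset.mem_range.mp hj))).trans hd
  have := ((isWeightedHomogeneous_X k (homogenizationWeight w) none).pow (d - w * j)).mul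
    (isWeightedHomogeneous_rename (e := some) (w := homogenizationWeight w) (fun _ ↦ rfl)
      (homogeneousComponent_isHomogeneous j p))
  convert this using 1
  simp [homogenizationWeight, hj_le]

variable {S : Type*} [CommRing S] [Algebra k S]

theorem aeval_homogenization (x : Option σ → S) :
    aeval x (homogenization w d p) = ∑ j ∈ Finset.range (p.totalDegree + 1),
      x none ^ (d - w * j) * aeval (x ∘ some) (homogeneousComponent j p) := by
  simp [homogenization, aeval_rename]

theorem aeval_homogenization_eq_pow_mul (hd : w * p.totalDegree ≤ d) (s : S) (x : σ → S) :
    aeval (Option.elim · s fun i ↦ s ^ w * x i) (homogenization w d p) = s ^ d * aeval x p := by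
  rw [aeval_homogenization]
  nth_rw 3 [← sum_homogeneousComponent p]
  rw [map_sum, Finset.mul_sum]
  refine Finset.sum_congr rfl fun j hj ↦ ?_
  have hj_le : w * j ≤ d :=
    (Nat.mul_le_mul_left w (Nat.lt_succ_iff.mp (Finset.mem_range.mp hj))).trans hd
  have component := aeval_mul_of_isHomogeneous (homogeneousComponent_isHomogeneous j p) (s ^ w) x
  calc s ^ (d - w * j) * aeval (fun i ↦ s ^ w * x i) (homogeneousComponent j p)
      = s ^ (d - w * j + w * j) * aeval x (homogeneousComponent j p) := by
        rw [component, pow_add, pow_mul, mul_assoc]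
    _ = s ^ d * aeval x (homogeneousComponent j p) := by rw [Nat.sub_add_cancel hj_le]

/-- The substitution `x ↦ s ^ w * x` that fixes the additional variable `s = X none`. -/
noncomputable def scaleVariables (w : ℕ) :
    MvPolynomial (Option σ) k →ₐ[k] MvPolynomial (Option σ) k :=
  aeval (Option.elim · (X none) fun i ↦ X none ^ w * X (some i))

theorem scaleVariables_X_none : scaleVariables w (X none : MvPolynomial (Option σ) k) = X none :=
  aeval_X _ _

theorem scaleVariables_homogenization (hd : w * p.totalDegree ≤ d) :
    scaleVariables w (homogenization w d p) = X none ^ d * rename some p := by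
  have := aeval_homogenization_eq_pow_mul hd (X none) (X (R := k) ∘ some)
  rwa [← rename_eq_aeval] at this

theorem homogeneousComponent_totalDegree_ne_zero (hp : p ≠ 0) :
    homogeneousComponent p.totalDegree p ≠ 0 := by
  obtain ⟨m, hm, hdeg⟩ := p.support.exists_mem_eq_sup (support_nonempty.mpr hp)
    fun s ↦ s.sum fun _ e ↦ e
  intro h
  have coeff_eq := congrArg (coeff m) h
  rw [coeff_homogeneousComponent, if_pos (show m.degree = p.totalDegree from hdeg.symm),
    coeff_zero] at coeff_eq
  exact mem_support_iff.mp hm coeff_eq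

theorem not_X_none_dvd_homogenization (hw : w ≠ 0) (hp : p ≠ 0) :
    ¬ X none ∣ homogenization w (w * p.totalDegree) p := by
  rintro ⟨q, hq⟩
  have at_infinity := congrArg (aeval (Option.elim · (0 : MvPolynomial σ k) X)) hq
  rw [aeval_homogenization, Finset.sum_eq_single p.totalDegree] at at_infinity
  · refine homogeneousComponent_totalDegree_ne_zero hp ?_
    simpa [Function.comp_def] using at_infinity
  · intro j hj hne
    have : j < p.totalDegree := by have := Finset.mem_range.mp hj; lia
    simp [Nat.sub_ne_zero_of_lt (Nat.mul_lt_mul_of_pos_left this (Nat.pos_of_ne_zero hw))]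
  · simp

end CommRing

section IsDomain

variable [CommRing k] [IsDomain k] {w : ℕ} {g h p : MvPolynomial σ k}

theorem isRelPrime_rename_some (hg : g ≠ 0) (hgh : IsRelPrime g h) :
    IsRelPrime (rename some g : MvPolynomial (Option σ) k) (rename some h) := by
  have rename_eq : (rename some : MvPolynomial σ k →ₐ[k] _) =
      (optionEquivLeft k σ).symm.toAlgHom.comp Polynomial.CAlgHom := by
    ext
    simp
  refine .of_map (optionEquivLeft k σ) ?_
  rw [rename_eq]
  suffices IsRelPrime (Polynomial.C g) (Polynomial.C h) by simpa
  intro d hdg hdh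
  have : d.natDegree = 0 := by
    simpa using Polynomial.natDegree_le_of_dvd hdg (by simpa using hg)
  rw [Polynomial.eq_C_of_natDegree_eq_zero this] at hdg hdh ⊢
  exact (hgh (by simpa using (Polynomial.C_dvd_iff_dvd_coeff _ _).mp hdg 0)
    (by simpa using (Polynomial.C_dvd_iff_dvd_coeff _ _).mp hdh 0)).map Polynomial.C

theorem scaleVariables_injective (w : ℕ) :
    Function.Injective (scaleVariables w : MvPolynomial (Option σ) k →ₐ[k] _) := by
  let K := FractionRing (MvPolynomial (Option σ) k)
  let s : K := algebraMap (MvPolynomial (Option σ) k) K (X none)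
  let x (i : σ) : K := algebraMap (MvPolynomial (Option σ) k) K (X (some i))
  let ψ : MvPolynomial (Option σ) k →ₐ[k] K := aeval fun i ↦ i.elim s fun i ↦ x i / s ^ w
  have left_inverse :
      ψ.comp (scaleVariables w) = IsScalarTower.toAlgHom k (MvPolynomial (Option σ) k) K := by
    ext (_ | i)
    · simp [ψ, s, scaleVariables, Algebra.algHom_apply]
    · simp [ψ, s, x, scaleVariables, mul_div_cancel₀, Algebra.algHom_apply]
  refine .of_comp (f := ψ) ?_
  rw [← AlgHom.coe_comp, left_inverse]
  exact IsFractionRing.injective _ K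

theorem homogenization_ne_zero {d : ℕ} (hp : p ≠ 0) (hd : w * p.totalDegree ≤ d) :
    homogenization w d p ≠ 0 := by
  rw [← map_ne_zero_iff _ (scaleVariables_injective w), scaleVariables_homogenization hd]
  exact mul_ne_zero (pow_ne_zero _ (X_ne_zero _))
    ((map_ne_zero_iff _ (rename_injective _ (Option.some_injective _))).mpr hp)

theorem isUnit_or_X_none_dvd_of_scaleVariables_dvd {q : MvPolynomial (Option σ) k} {N : ℕ}
    (hq : scaleVariables w q ∣ X none ^ N) : IsUnit q ∨ X none ∣ q := by
  obtain ⟨j, -, u, hu⟩ := (dvd_prime_pow (X_prime (R := k) (i := none)) N).mp hq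
  obtain ⟨c, hc, hcu⟩ := MvPolynomial.isUnit_iff_eq_C_of_isReduced.mp u.isUnit
  have hqc : q * C c = X none ^ j := scaleVariables_injective w (by
    rw [map_mul, map_pow, scaleVariables_X_none, ← hu, hcu, scaleVariables, algHom_C,
      algebraMap_eq])
  obtain rfl | hj := eq_or_ne j 0
  · exact .inl (.of_mul_eq_one (C c) (by simpa using hqc))
  · right
    refine ((hc.map C).dvd_mul_right).mp (hqc ▸ dvd_pow_self _ hj)

end IsDomain

section Field

variable [Field k] {w : ℕ} {g h : MvPolynomial σ k}

theorem isRelPrime_homogenization {d e : ℕ} (hw : w ≠ 0) (hg : g ≠ 0) (hh : h ≠ 0)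
    (hgh : IsRelPrime g h) (hd : w * g.totalDegree ≤ d) (he : w * h.totalDegree ≤ e)
    (hde : w * g.totalDegree = d ∨ w * h.totalDegree = e) :
    IsRelPrime (homogenization w d g) (homogenization w e h) := by
  intro q hqg hqh
  have dvd_g := map_dvd (scaleVariables w) hqg
  have dvd_h := map_dvd (scaleVariables w) hqh
  rw [scaleVariables_homogenization hd] at dvd_g
  rw [scaleVariables_homogenization he] at dvd_h
  have dvd_pow : scaleVariables w q ∣ X none ^ (d + e) := by
    rw [pow_add]
    exact dvd_mul_of_isRelPrime (isRelPrime_rename_some hg hgh) dvd_g dvd_h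
  refine (isUnit_or_X_none_dvd_of_scaleVariables_dvd dvd_pow).resolve_right fun hX ↦ ?_
  obtain rfl | rfl := hde
  · exact not_X_none_dvd_homogenization hw hg (hX.trans hqg)
  · exact not_X_none_dvd_homogenization hw hh (hX.trans hqh)

end Field

end Homogenization

section Klein

open MvPolynomial

variable {k σ : Type*} [Field k] [CharZero k] {f g h : MvPolynomial σ k}

theorem totalDegree_pow_of_isDomain {R : Type*} [CommRing R] [IsDomain R] (p : MvPolynomial σ R)
    (n : ℕ) : (p ^ n).totalDegree = n * p.totalDegree := by
  obtain rfl | hp := eq_or_ne p 0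
  · obtain rfl | hn := eq_or_ne n 0 <;> simp [*]
  induction n with
  | zero => simp
  | succ n ih => rw [pow_succ, totalDegree_mul_of_isDomain (pow_ne_zero _ hp) hp, ih, Nat.succ_mul]

theorem exists_finset_rename_triple {R : Type*} [CommRing R] (p q r : MvPolynomial σ R) :
    ∃ (s : Finset σ) (p₀ q₀ r₀ : MvPolynomial s R), rename Subtype.val p₀ = p ∧
      rename Subtype.val q₀ = q ∧ rename Subtype.val r₀ = r := by
  classical
  have of_vars_subset {f : MvPolynomial σ R} (hf : f.vars ⊆ p.vars ∪ q.vars ∪ r.vars) :=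
    exists_rename_eq_of_vars_subset_range f (Subtype.val : ↥(p.vars ∪ q.vars ∪ r.vars) → σ)
      Subtype.val_injective fun i hi ↦ ⟨⟨i, hf hi⟩, rfl⟩
  obtain ⟨p₀, hp₀⟩ := of_vars_subset (Finset.subset_union_left.trans Finset.subset_union_left)
  obtain ⟨q₀, hq₀⟩ := of_vars_subset (Finset.subset_union_right.trans Finset.subset_union_left)
  obtain ⟨r₀, hr₀⟩ := of_vars_subset Finset.subset_union_right
  exact ⟨_, p₀, q₀, r₀, hp₀, hq₀, hr₀⟩

theorem five_mul_totalDegree_le (hrel : h ^ 2 + g ^ 3 = 1728 * f ^ 5) :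
    5 * f.totalDegree ≤ max (2 * h.totalDegree) (3 * g.totalDegree) := by
  obtain rfl | hf := eq_or_ne f 0
  · simp
  have totalDegree_const : (1728 : MvPolynomial σ k).totalDegree = 0 := by
    rw [← map_ofNat C, totalDegree_C]
  calc 5 * f.totalDegree = (1728 * f ^ 5).totalDegree := by
        rw [totalDegree_mul_of_isDomain (by norm_num) (pow_ne_zero 5 hf), totalDegree_const,
          zero_add, totalDegree_pow_of_isDomain]
    _ ≤ max (h ^ 2).totalDegree (g ^ 3).totalDegree := hrel ▸ totalDegree_add _ _
    _ ≤ _ := max_le_max (totalDegree_pow _ _) (totalDegree_pow _ _)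

variable [IsAlgClosed k]

theorem exists_vertexForm_eq_of_finite [Finite σ] (hf : f ≠ 0) (hg : g ≠ 0) (hh : h ≠ 0)
    (hgh : IsRelPrime g h) (hrel : h ^ 2 + g ^ 3 = 1728 * f ^ 5) :
    ∃ u v : MvPolynomial σ k, vertexForm u v = f := by
  set m := max (2 * h.totalDegree) (3 * g.totalDegree)
  have f_le : 60 * f.totalDegree ≤ 12 * m := by have := five_mul_totalDegree_le hrel; lia
  have g_le : 60 * g.totalDegree ≤ 20 * m := by lia
  have h_le : 60 * h.totalDegree ≤ 30 * m := by lia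
  have homogenized_rel : homogenization 60 (30 * m) h ^ 2 + homogenization 60 (20 * m) g ^ 3 =
      1728 * homogenization 60 (12 * m) f ^ 5 := by
    apply scaleVariables_injective 60
    have := congrArg (fun p ↦ X none ^ (60 * m) * rename some p) hrel
    simp only [map_add, map_mul, map_pow, map_ofNat, scaleVariables_homogenization, f_le, g_le,
      h_le] at this ⊢
    linear_combination this
  obtain ⟨u, v, huv⟩ := exists_vertexForm_eq_of_isWeightedHomogeneous
    (by rintro (_ | _) <;> simp [homogenizationWeight])
    (isWeightedHomogeneous_homogenization f_le) (isWeightedHomogeneous_homogenization g_le)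
    (homogenization_ne_zero hf f_le) (homogenization_ne_zero hg g_le)
    (homogenization_ne_zero hh h_le)
    (isRelPrime_homogenization (by norm_num) hg hh hgh g_le h_le (by lia)) homogenized_rel
  let dehomogenize : MvPolynomial (Option σ) k →ₐ[k] MvPolynomial σ k :=
    aeval fun i ↦ i.elim 1 fun i ↦ 1 ^ 60 * X i
  refine ⟨dehomogenize u, dehomogenize v, ?_⟩
  calc vertexForm (dehomogenize u) (dehomogenize v)
      = dehomogenize (homogenization 60 (12 * m) f) := by
        rw [← huv]
        exact (map_vertexForm dehomogenize.toRingHom u v).symm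
    _ = f := (aeval_homogenization_eq_pow_mul f_le 1 X).trans (by simp)

theorem exists_vertexForm_eq (hf : f ≠ 0) (hg : g ≠ 0) (hh : h ≠ 0)
    (hgh : IsRelPrime g h) (hrel : h ^ 2 + g ^ 3 = 1728 * f ^ 5) :
    ∃ u v : MvPolynomial σ k, vertexForm u v = f := by
  obtain ⟨s, f₀, g₀, h₀, rfl, rfl, rfl⟩ := exists_finset_rename_triple f g h
  have val_injective : Function.Injective (Subtype.val : s → σ) := Subtype.val_injective
  have hrel₀ : h₀ ^ 2 + g₀ ^ 3 = 1728 * f₀ ^ 5 :=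
    rename_injective _ val_injective (by simpa [map_ofNat] using hrel)
  have : IsLocalHom (rename Subtype.val : MvPolynomial s k →ₐ[k] MvPolynomial σ k) :=
    ⟨fun p hp ↦ by simpa using hp.map (killCompl val_injective)⟩
  obtain ⟨u, v, rfl⟩ := exists_vertexForm_eq_of_finite (ne_zero_of_map hf) (ne_zero_of_map hg)
    (ne_zero_of_map hh) (.of_map (rename Subtype.val) hgh) hrel₀
  refine ⟨rename Subtype.val u, rename Subtype.val v, ?_⟩
  exact (map_vertexForm (rename Subtype.val : MvPolynomial s k →ₐ[k] _).toRingHom u v).symm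

end Klein

section Constants

open MvPolynomial

variable {k σ : Type*} [Field k] {f g h : MvPolynomial σ k}

theorem mem_bot_of_isUnit (hf : IsUnit f) : f ∈ (⊥ : Subalgebra k (MvPolynomial σ k)) := by
  obtain ⟨c, -, rfl⟩ := MvPolynomial.isUnit_iff_eq_C_of_isReduced.mp hf
  exact Algebra.mem_bot.mpr ⟨c, rfl⟩

theorem isUnit_of_mem_bot (hf : f ∈ (⊥ : Subalgebra k (MvPolynomial σ k))) (hf₀ : f ≠ 0) :
    IsUnit f := by
  obtain ⟨c, rfl⟩ := Algebra.mem_bot.mp hf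
  exact (isUnit_iff_ne_zero.mpr (ne_zero_of_map hf₀)).map (algebraMap k _)

theorem notMem_bot_of_irreducible (hf : Irreducible f) :
    f ∉ (⊥ : Subalgebra k (MvPolynomial σ k)) :=
  fun hmem ↦ hf.not_isUnit (isUnit_of_mem_bot hmem hf.ne_zero)

theorem totalDegree_pos_of_irreducible (hf : Irreducible f) : 0 < f.totalDegree := by
  refine Nat.pos_of_ne_zero fun hdeg ↦ notMem_bot_of_irreducible hf ?_
  exact Algebra.mem_bot.mpr ⟨_, (totalDegree_eq_zero_iff_eq_C.mp hdeg).symm⟩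

theorem isUnit_or_dvd_of_dvd_pow {M : Type*} [CommMonoid M] [DecompositionMonoid M] {p q : M}
    {n : ℕ} (hp : Irreducible p) (hq : q ∣ p ^ n) : IsUnit q ∨ p ∣ q := by
  refine or_iff_not_imp_right.mpr fun hpq ↦ ?_
  exact (hp.isRelPrime_iff_not_dvd.mpr hpq).pow_left.symm dvd_rfl hq

variable {c d : MvPolynomial σ k}

theorem eq_of_dvd_add_mul (hc : c ∈ (⊥ : Subalgebra k (MvPolynomial σ k)))
    (hd : d ∈ (⊥ : Subalgebra k (MvPolynomial σ k))) (hhf : ¬ h ∣ f) (hdvd_c : h ∣ g + c * f)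
    (hdvd_d : h ∣ g + d * f) : c = d := by
  by_contra hne
  have sub_isUnit : IsUnit (c - d) := isUnit_of_mem_bot (sub_mem hc hd) (sub_ne_zero.mpr hne)
  have sub_eq : g + c * f - (g + d * f) = (c - d) * f := by ring
  exact hhf (sub_isUnit.dvd_mul_left.mp (sub_eq ▸ dvd_sub hdvd_c hdvd_d))

theorem eq_of_isUnit_add_mul (hc : c ∈ (⊥ : Subalgebra k (MvPolynomial σ k)))
    (hd : d ∈ (⊥ : Subalgebra k (MvPolynomial σ k))) (hf : Irreducible f)
    (hunit_c : IsUnit (g + c * f)) (hunit_d : IsUnit (g + d * f)) : c = d := by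
  by_contra hne
  have sub_isUnit : IsUnit (c - d) := isUnit_of_mem_bot (sub_mem hc hd) (sub_ne_zero.mpr hne)
  have sub_eq : g + c * f - (g + d * f) = (c - d) * f := by ring
  refine notMem_bot_of_irreducible ((irreducible_isUnit_mul sub_isUnit).mpr hf) ?_
  exact sub_eq ▸ sub_mem (mem_bot_of_isUnit hunit_c) (mem_bot_of_isUnit hunit_d)

end Constants

section Composition

open MvPolynomial

variable {k : Type*} [Field k] [IsAlgClosed k]

theorem mem_bot_of_aeval_mem_bot {A : Type*} [CommRing A] [IsDomain A] [Algebra k A] {x : A}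
    {P : Polynomial k} (hP : P.natDegree ≠ 0) (hx : Polynomial.aeval x P ∈ (⊥ : Subalgebra k A)) :
    x ∈ (⊥ : Subalgebra k A) := by
  obtain ⟨c, hc⟩ := Algebra.mem_bot.mp hx
  refine mem_bot_of_isAlgebraic ⟨P - Polynomial.C c, fun hzero ↦ hP ?_, by simp [hc]⟩
  rw [sub_eq_zero.mp hzero, Polynomial.natDegree_C]

theorem not_irreducible_aeval {σ : Type*} {P : Polynomial k} (hP : 2 ≤ P.natDegree)
    (f : MvPolynomial σ k) : ¬ Irreducible (Polynomial.aeval f P) := by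
  intro hirr
  have hf : f ∉ (⊥ : Subalgebra k (MvPolynomial σ k)) := fun hf ↦
    notMem_bot_of_irreducible hirr (Algebra.adjoin_le (Set.singleton_subset_iff.mpr hf)
      (Polynomial.aeval_mem_adjoin_singleton k f))
  have P_degree : 0 < P.natDegree := by lia
  obtain ⟨z, hz⟩ := IsAlgClosed.exists_root P
    (Polynomial.natDegree_pos_iff_degree_pos.mp P_degree).ne'
  obtain ⟨Q, rfl⟩ := Polynomial.dvd_iff_isRoot.mpr hz
  have linear_degree : (Polynomial.X - Polynomial.C z).natDegree ≠ 0 := by simp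
  have cofactor_degree : Q.natDegree ≠ 0 := by
    have := Polynomial.natDegree_mul_le (p := Polynomial.X - Polynomial.C z) (q := Q)
    rw [Polynomial.natDegree_X_sub_C] at this
    lia
  rw [map_mul] at hirr
  obtain hunit | hunit := hirr.isUnit_or_isUnit rfl
  · exact hf (mem_bot_of_aeval_mem_bot linear_degree (mem_bot_of_isUnit hunit))
  · exact hf (mem_bot_of_aeval_mem_bot cofactor_degree (mem_bot_of_isUnit hunit))

theorem not_irreducible_vertexForm {σ : Type*} (u v : MvPolynomial σ k) :
    ¬ Irreducible (vertexForm u v) := by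
  intro hirr
  wlog hu : IsUnit u generalizing u v
  · have factor : vertexForm u v = u * (v * (u ^ 10 + 11 * u ^ 5 * v ^ 5 - v ^ 10)) :=
      mul_assoc _ _ _
    have hv := isUnit_of_mul_isUnit_left ((hirr.isUnit_or_isUnit factor).resolve_left hu)
    exact this v (-u) (by rwa [vertexForm_rotate]) hv
  obtain ⟨c, hc, rfl⟩ := MvPolynomial.isUnit_iff_eq_C_of_isReduced.mp hu
  have hc₀ : c ≠ 0 := hc.ne_zero
  let P : Polynomial k := vertexForm (.C c) .X
  have hP : P.natDegree = 11 := by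
    unfold P vertexForm
    compute_degree!
  have aeval_P : Polynomial.aeval v P = vertexForm (C c) v := by
    have := map_vertexForm (Polynomial.aeval (R := k) v).toRingHom (Polynomial.C c) Polynomial.X
    simpa [algebraMap_eq] using this
  exact not_irreducible_aeval (by lia) v (aeval_P ▸ hirr)

end Composition

section SphericalExponents

open MvPolynomial

variable {k σ : Type*} [Field k] [CharZero k] [IsAlgClosed k] {f g h : MvPolynomial σ k}

theorem exists_add_C_mul_eq_C_of_sq_add_sq {p x y : MvPolynomial σ k} {n : ℕ} (hp : Irreducible p)
    (hpx : ¬ p ∣ x) (hrel : p ^ n + x ^ 2 + y ^ 2 = 0) :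
    ∃ i c : k, i ^ 2 = -1 ∧ c ≠ 0 ∧ x + C i * y = C c := by
  obtain ⟨i, hi⟩ := IsAlgClosed.exists_pow_nat_eq (-1 : k) two_pos
  have C_sq : (C i : MvPolynomial σ k) ^ 2 = -1 := by rw [← C_pow, hi, C_neg, C_1]
  have factor : (x + C i * y) * (x + C (-i) * y) = -p ^ n := by
    rw [C_neg]
    linear_combination hrel - y ^ 2 * C_sq
  have not_both : ¬ (p ∣ x + C i * y ∧ p ∣ x + C (-i) * y) := by
    rintro ⟨hdvd, hdvd'⟩
    have two_mul_x : x + C i * y + (x + C (-i) * y) = C 2 * x := by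
      rw [C_neg, map_ofNat]
      ring
    have hunit : IsUnit (C 2 : MvPolynomial σ k) := (isUnit_iff_ne_zero.mpr two_ne_zero).map C
    exact hpx (hunit.dvd_mul_left.mp (two_mul_x ▸ dvd_add hdvd hdvd'))
  have of_isUnit {j : k} (hj : j ^ 2 = -1) (hunit : IsUnit (x + C j * y)) :
      ∃ i c : k, i ^ 2 = -1 ∧ c ≠ 0 ∧ x + C i * y = C c := by
    obtain ⟨c, hc, hxc⟩ := MvPolynomial.isUnit_iff_eq_C_of_isReduced.mp hunit
    exact ⟨j, c, hj, hc.ne_zero, hxc⟩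
  obtain hunit | hdvd := isUnit_or_dvd_of_dvd_pow hp (dvd_neg.mp (factor ▸ dvd_mul_right _ _))
  · exact of_isUnit hi hunit
  obtain hunit | hdvd' := isUnit_or_dvd_of_dvd_pow hp (dvd_neg.mp (factor ▸ dvd_mul_left _ _))
  · exact of_isUnit (by rw [neg_sq, hi]) hunit
  · exact absurd ⟨hdvd, hdvd'⟩ not_both

theorem pow_add_sq_add_sq_ne_zero {a : ℕ} (ha : 2 ≤ a) (hf : Irreducible f) (hh : Irreducible h)
    (hfh : IsRelPrime f h) : f ^ a + g ^ 2 + h ^ 2 ≠ 0 := by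
  intro hrel
  obtain ⟨i, c, hi, hc, hconst⟩ := exists_add_C_mul_eq_C_of_sq_add_sq hf
    (hf.isRelPrime_iff_not_dvd.mp hfh) (y := g) (by linear_combination hrel)
  have C_sq : (C i : MvPolynomial σ k) ^ 2 = -1 := by rw [← C_pow, hi, C_neg, C_1]
  have scaled_h_eq : C (-(2 * c)) * h =
      Polynomial.aeval f (.X ^ a - .C (c ^ 2) : Polynomial k) := by
    simp only [map_sub, map_pow, map_neg, map_mul, map_ofNat, Polynomial.aeval_X,
      Polynomial.aeval_C, algebraMap_eq, ← hconst]
    linear_combination g ^ 2 * C_sq - hrel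
  have scale_isUnit : IsUnit (C (-(2 * c)) : MvPolynomial σ k) :=
    (isUnit_iff_ne_zero.mpr (by simpa using hc)).map C
  refine not_irreducible_aeval (P := .X ^ a - .C (c ^ 2)) ?_ f
    (scaled_h_eq ▸ (irreducible_isUnit_mul scale_isUnit).mpr hh)
  rwa [Polynomial.natDegree_X_pow_sub_C]

theorem pow_four_add_cube_add_sq_ne_zero (hg : Irreducible g) (hh : Irreducible h)
    (hgh : IsRelPrime g h) : f ^ 4 + g ^ 3 + h ^ 2 ≠ 0 := by
  intro hrel
  obtain ⟨i, c, hi, -, hconst⟩ := exists_add_C_mul_eq_C_of_sq_add_sq hg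
    (hg.isRelPrime_iff_not_dvd.mp hgh) (y := f ^ 2) (n := 3) (by linear_combination hrel)
  let P : Polynomial k := .C (-i) * .X ^ 2 + .C c
  have i_ne_zero : i ≠ 0 := by rintro rfl; simp at hi
  have hP : P.natDegree = 2 := by
    rw [Polynomial.natDegree_add_C, Polynomial.natDegree_C_mul_X_pow _ _ (by simpa)]
  have h_eq : h = Polynomial.aeval f P := by
    simp only [P, map_add, map_mul, map_pow, map_neg, Polynomial.aeval_C, Polynomial.aeval_X,
      algebraMap_eq]
    linear_combination hconst
  exact not_irreducible_aeval hP.ge f (h_eq ▸ hh)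

theorem pow_add_pow_add_pow_ne_zero_of_odd {n m : ℕ} (hn : Odd n) (hn₃ : 3 ≤ n)
    (hf : Irreducible f) (hh : Irreducible h) (hfh : IsRelPrime f h) :
    f ^ n + g ^ n + h ^ m ≠ 0 := by
  classical
  intro hrel
  have : NeZero n := ⟨by lia⟩
  obtain ⟨ξ, hξ⟩ := HasEnoughRootsOfUnity.exists_primitiveRoot k n
  have hξ' : IsPrimitiveRoot (C ξ : MvPolynomial σ k) n := hξ.map_of_injective (C_injective σ k)
  have prod_eq : ∏ ζ ∈ Polynomial.nthRootsFinset n 1, (g + ζ * f) = -h ^ m := by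
    rw [← hξ'.pow_add_pow_eq_prod_add_mul g f hn]
    linear_combination hrel
  have root_mem_bot {ζ : MvPolynomial σ k} (hζ : ζ ∈ Polynomial.nthRootsFinset n 1) :
      ζ ∈ (⊥ : Subalgebra k (MvPolynomial σ k)) :=
    mem_bot_of_isUnit (.of_pow_eq_one ((Polynomial.mem_nthRootsFinset (by lia) 1).mp hζ) (by lia))
  have isUnit_of_not_dvd {ζ} (hζ : ζ ∈ Polynomial.nthRootsFinset n 1) (hdvd : ¬ h ∣ g + ζ * f) :
      IsUnit (g + ζ * f) :=
    (isUnit_or_dvd_of_dvd_pow hh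
      (dvd_neg.mp (prod_eq ▸ Finset.dvd_prod_of_mem _ hζ))).resolve_right hdvd
  have card_lt : (Finset.univ : Finset Bool).card <
      (Polynomial.nthRootsFinset n (1 : MvPolynomial σ k)).card := by
    rw [hξ'.card_nthRootsFinset, Finset.card_univ, Fintype.card_bool]
    lia
  obtain ⟨ζ, hζ, ζ', hζ', hne, hclass⟩ := Finset.exists_ne_map_eq_of_card_lt_of_maps_to card_lt
    (f := fun ζ ↦ decide (h ∣ g + ζ * f)) fun _ _ ↦ Finset.mem_coe.mpr (Finset.mem_univ _)
  have dvd_iff : h ∣ g + ζ * f ↔ h ∣ g + ζ' * f := decide_eq_decide.mp hclass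
  refine hne ?_
  obtain hdvd | hdvd := em (h ∣ g + ζ * f)
  · exact eq_of_dvd_add_mul (root_mem_bot hζ) (root_mem_bot hζ')
      (hh.isRelPrime_iff_not_dvd.mp hfh.symm) hdvd (dvd_iff.mp hdvd)
  · exact eq_of_isUnit_add_mul (root_mem_bot hζ) (root_mem_bot hζ') hf
      (isUnit_of_not_dvd hζ hdvd) (isUnit_of_not_dvd hζ' (dvd_iff.not.mp hdvd))

theorem pow_five_add_cube_add_sq_ne_zero (hf : Irreducible f) (hg : g ≠ 0) (hh : h ≠ 0)
    (hgh : IsRelPrime g h) : f ^ 5 + g ^ 3 + h ^ 2 ≠ 0 := by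
  intro hrel
  obtain ⟨μ, hμ⟩ := IsAlgClosed.exists_pow_nat_eq (-1 / 1728 : k) (n := 5) (by norm_num)
  have hμ₀ : μ ≠ 0 := by rintro rfl; norm_num at hμ
  have scaled_irreducible : Irreducible (C μ * f) :=
    (irreducible_isUnit_mul ((isUnit_iff_ne_zero.mpr hμ₀).map C)).mpr hf
  have scale : (1728 : MvPolynomial σ k) * C μ ^ 5 = -1 := by
    rw [← C_pow, hμ, ← map_ofNat C 1728, ← C_mul, mul_div_cancel₀ _ (by norm_num), C_neg, C_1]
  obtain ⟨u, v, huv⟩ := exists_vertexForm_eq scaled_irreducible.ne_zero hg hh hgh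
    (by linear_combination hrel - f ^ 5 * scale)
  exact not_irreducible_vertexForm u v (huv ▸ scaled_irreducible)

end SphericalExponents

/-- The numerator of the logarithmic derivative of `g ^ b / h ^ c` over the denominator `g * h`. -/
def weightedWronskian {A R : Type*} [CommRing A] [CommRing R] [Algebra A R] (D : Derivation A R R)
    (b c : ℕ) (g h : R) : R :=
  b * (h * D g) - c * (g * D h)

theorem pow_dvd_weightedWronskian {A R : Type*} [CommRing A] [CommRing R] [Algebra A R]
    [DecompositionMonoid R] (D : Derivation A R R) {f g h : R} (hfg : IsRelPrime f g)
    {a b c : ℕ} (hrel : f ^ (a + 1) + g ^ (b + 1) + h ^ (c + 1) = 0) :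
    f ^ a ∣ weightedWronskian D (b + 1) (c + 1) g h := by
  have derived_rel : (a + 1 : ℕ) * f ^ a * D f + (b + 1 : ℕ) * g ^ b * D g +
      (c + 1 : ℕ) * h ^ c * D h = 0 := by
    simpa [mul_assoc] using congrArg D hrel
  refine (IsRelPrime.pow hfg : IsRelPrime (f ^ a) (g ^ b)).dvd_of_dvd_mul_left
    ⟨-weightedWronskian D (a + 1) (c + 1) f h, ?_⟩
  unfold weightedWronskian
  linear_combination h * derived_rel - ((c + 1 : ℕ) : R) * D h * hrel

section Mason

open MvPolynomial

variable {σ : Type*}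

theorem totalDegree_pderiv_lt {R : Type*} [CommSemiring R] {p : MvPolynomial σ R} {i : σ}
    (hp : pderiv i p ≠ 0) : (pderiv i p).totalDegree < p.totalDegree := by
  classical
  obtain ⟨m, hm, hdeg⟩ := (pderiv i p).support.exists_mem_eq_sup (support_nonempty.mpr hp)
    fun s ↦ s.sum fun _ e ↦ e
  rw [mem_support_iff, coeff_pderiv] at hm
  calc (pderiv i p).totalDegree < (m + Finsupp.single i 1).sum fun _ e ↦ e := by
        rw [totalDegree, hdeg, Finsupp.sum_add_index' (by simp) (by simp)]
        simp
    _ ≤ p.totalDegree := le_totalDegree (mem_support_iff.mpr (left_ne_zero_of_mul hm))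

theorem pderiv_ne_zero_of_mem_vars {R : Type*} [CommRing R] [IsDomain R] [CharZero R]
    {p : MvPolynomial σ R} {i : σ} (hi : i ∈ p.vars) : pderiv i p ≠ 0 := by
  obtain ⟨m, hm, him⟩ := (mem_vars_iff_mem_support ..).mp hi
  have m_eq : m - Finsupp.single i 1 + Finsupp.single i 1 = m :=
    tsub_add_cancel_of_le (Finsupp.single_le_iff.mpr
      (Nat.one_le_iff_ne_zero.mpr (Finsupp.mem_support_iff.mp him)))
  intro hzero
  have coeff_eq := congrArg (coeff (m - Finsupp.single i 1)) hzero
  rw [coeff_pderiv, m_eq, coeff_zero] at coeff_eq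
  exact (mul_ne_zero (mem_support_iff.mp hm) (Nat.cast_add_one_ne_zero _)) coeff_eq

theorem not_dvd_pderiv {R : Type*} [CommRing R] [IsDomain R] {p : MvPolynomial σ R} {i : σ}
    (hp : pderiv i p ≠ 0) : ¬ p ∣ pderiv i p := fun hdvd ↦
  (totalDegree_le_of_dvd_of_isDomain hdvd hp).not_gt (totalDegree_pderiv_lt hp)

theorem totalDegree_natCast_mul_mul_pderiv_lt {R : Type*} [CommSemiring R] {p : MvPolynomial σ R}
    (hp : 0 < p.totalDegree) (q : MvPolynomial σ R) (n : ℕ) (i : σ) :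
    (n * (q * pderiv i p)).totalDegree < p.totalDegree + q.totalDegree := by
  obtain hzero | hne := eq_or_ne (pderiv i p) 0
  · simp [hzero, hp]
  have totalDegree_natCast : (n : MvPolynomial σ R).totalDegree = 0 := by
    rw [← map_natCast C, totalDegree_C]
  calc (n * (q * pderiv i p)).totalDegree
      ≤ 0 + (q.totalDegree + (pderiv i p).totalDegree) := by
        grw [totalDegree_mul, totalDegree_mul, totalDegree_natCast]
    _ < p.totalDegree + q.totalDegree := by have := totalDegree_pderiv_lt hne; lia

theorem totalDegree_weightedWronskian_lt {R : Type*} [CommRing R] {g h : MvPolynomial σ R}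
    (hg : 0 < g.totalDegree) (hh : 0 < h.totalDegree) (b c : ℕ) (i : σ) :
    (weightedWronskian (pderiv (R := R) i) b c g h).totalDegree <
      g.totalDegree + h.totalDegree := by
  refine (totalDegree_sub _ _).trans_lt (max_lt ?_ ?_)
  · exact totalDegree_natCast_mul_mul_pderiv_lt hg h b i
  · exact add_comm g.totalDegree _ ▸ totalDegree_natCast_mul_mul_pderiv_lt hh g c i

variable {k : Type*} [Field k] [CharZero k] {f g h : MvPolynomial σ k}

theorem exists_weightedWronskian_pderiv_ne_zero (hg : 0 < g.totalDegree) (hgh : IsRelPrime g h)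
    {b : ℕ} (hb : b ≠ 0) (c : ℕ) : ∃ i, weightedWronskian (pderiv (R := k) i) b c g h ≠ 0 := by
  have vars_nonempty : g.vars.Nonempty := by
    refine Finset.nonempty_iff_ne_empty.mpr fun hempty ↦ hg.ne' ?_
    exact totalDegree_eq_zero_iff_eq_C.mpr (vars_eq_empty_iff_eq_C.mp hempty)
  obtain ⟨i, hi⟩ := vars_nonempty
  refine ⟨i, fun hzero ↦ not_dvd_pderiv (pderiv_ne_zero_of_mem_vars hi) ?_⟩
  have b_isUnit : IsUnit (b : MvPolynomial σ k) := by
    simpa using (isUnit_iff_ne_zero.mpr (Nat.cast_ne_zero.mpr hb : (b : k) ≠ 0)).map (C (σ := σ))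
  have hdvd : g ∣ b * (h * pderiv i g) := by
    rw [sub_eq_zero.mp hzero]
    exact (dvd_mul_right g _).mul_left _
  exact hgh.dvd_of_dvd_mul_left (b_isUnit.dvd_mul_left.mp hdvd)

theorem mul_totalDegree_lt_add (hg : 0 < g.totalDegree) (hh : 0 < h.totalDegree)
    (hfg : IsRelPrime f g) (hgh : IsRelPrime g h) {a b c : ℕ} (ha : a ≠ 0) (hb : b ≠ 0)
    (hc : c ≠ 0) (hrel : f ^ a + g ^ b + h ^ c = 0) :
    a * f.totalDegree < f.totalDegree + g.totalDegree + h.totalDegree := by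
  obtain ⟨a, rfl⟩ := Nat.exists_eq_succ_of_ne_zero ha
  obtain ⟨b, rfl⟩ := Nat.exists_eq_succ_of_ne_zero hb
  obtain ⟨c, rfl⟩ := Nat.exists_eq_succ_of_ne_zero hc
  obtain ⟨i, hi⟩ := exists_weightedWronskian_pderiv_ne_zero hg hgh b.succ_ne_zero (c + 1)
  have pow_degree_le := totalDegree_le_of_dvd_of_isDomain
    (pow_dvd_weightedWronskian (pderiv i) hfg hrel) hi
  rw [totalDegree_pow_of_isDomain] at pow_degree_le
  have := totalDegree_weightedWronskian_lt hg hh (b + 1) (c + 1) i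
  lia

end Mason

theorem exponents_spherical {a b c d e f : ℕ} (hba : b ≤ a) (hcb : c ≤ b) (hc : 2 ≤ c)
    (ha_lt : a * d < d + e + f) (hb_lt : b * e < d + e + f) (hc_lt : c * f < d + e + f) :
    c = 2 ∧ (b = 2 ∨ b = 3 ∧ a ≤ 5) := by
  have weaken {x y z : ℕ} (hx : x ≤ a) (hy : y ≤ b) (hz : z ≤ c) :
      x * d < d + e + f ∧ y * e < d + e + f ∧ z * f < d + e + f :=
    ⟨(Nat.mul_le_mul_right d hx).trans_lt ha_lt, (Nat.mul_le_mul_right e hy).trans_lt hb_lt,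
      (Nat.mul_le_mul_right f hz).trans_lt hc_lt⟩
  have not_333 : ¬ 3 ≤ c := fun h ↦ by
    have := weaken (h.trans (hcb.trans hba)) (h.trans hcb) h
    lia
  have not_442 : ¬ 4 ≤ b := fun h ↦ by
    have := weaken (h.trans hba) h hc
    lia
  have not_632 : ¬ (3 ≤ b ∧ 6 ≤ a) := fun ⟨h₃, h₆⟩ ↦ by
    have := weaken h₆ h₃ hc
    lia
  lia

end IitakaABC

open IitakaABC in
theorem iitaka_abc_general {k σ : Type*} [Field k] [IsAlgClosed k] [CharZero k]
    {f g h : MvPolynomial σ k} (hf : Irreducible f) (hg : Irreducible g) (hh : Irreducible h)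
    (hfg : IsRelPrime f g) (hfh : IsRelPrime f h) (hgh : IsRelPrime g h)
    {a b c : ℕ} (hba : b ≤ a) (hcb : c ≤ b) (hc : 1 ≤ c)
    (heq : f ^ a + g ^ b + h ^ c = 0) : c = 1 := by
  by_contra hc_ne
  have deg_f := totalDegree_pos_of_irreducible hf
  have deg_g := totalDegree_pos_of_irreducible hg
  have deg_h := totalDegree_pos_of_irreducible hh
  have mason_f := mul_totalDegree_lt_add deg_g deg_h hfg hgh
    (by lia) (by lia) (by lia) heq
  have mason_g := mul_totalDegree_lt_add deg_f deg_h hfg.symm hfh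
    (a := b) (b := a) (c := c) (by lia) (by lia) (by lia) (by linear_combination heq)
  have mason_h := mul_totalDegree_lt_add deg_f deg_g hfh.symm hfg
    (a := c) (b := a) (c := b) (by lia) (by lia) (by lia) (by linear_combination heq)
  obtain ⟨rfl, rfl | ⟨rfl, ha⟩⟩ := exponents_spherical hba hcb (by lia)
    mason_f (by lia) (by lia)
  · exact pow_add_sq_add_sq_ne_zero hba hf hh hfh heq
  interval_cases a
  · exact pow_add_pow_add_pow_ne_zero_of_odd (by decide) le_rfl hf hh hfh heq
  · exact pow_four_add_cube_add_sq_ne_zero hg hh hgh heq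
  · exact pow_five_add_cube_add_sq_ne_zero hf hg.ne_zero hh.ne_zero hgh heq

open MvPolynomial in
/-- Iitaka: Let `k` be algebraically closed of characteristic zero and `n ≥ 1`.
If `f, g, h ∈ k[x_1, …, x_n]` are irreducible and pairwise relatively prime with
`f^a + g^b + h^c = 0` for integers `a ≥ b ≥ c ≥ 1`, then `c = 1`. -/
theorem iitaka_abc (k : Type*) [Field k] [IsAlgClosed k] [CharZero k]
    (n : ℕ) (hn : 1 ≤ n)
    (f g h : MvPolynomial (Fin n) k)
    (hf : Irreducible f) (hg : Irreducible g) (hh : Irreducible h)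
    (hfg : IsRelPrime f g) (hfh : IsRelPrime f h) (hgh : IsRelPrime g h)
    (a b c : ℕ) (hba : b ≤ a) (hcb : c ≤ b) (hc : 1 ≤ c)
    (heq : f ^ a + g ^ b + h ^ c = 0) : c = 1 :=
  iitaka_abc_general hf hg hh hfg hfh hgh hba hcb hc heq
end

section
/- Let k be an algebraically closed field of characteristic zero and let B = k[x,y,z]/(x^5 + y^3 + z^2). Then B is rigid: the only locally nilpotent k-derivation of B is the zero derivation. -/
set_option synthInstance.maxHeartbeats 400000

open MvPolynomial in
/-- The ring `k[x, y, z]/(x⁵ + y³ + z²)`. -/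
noncomputable abbrev PoincareSurfaceRing (k : Type*) [Field k] : Type _ :=
  MvPolynomial (Fin 3) k ⧸
    (Ideal.span {(X 0 : MvPolynomial (Fin 3) k) ^ 5 + X 1 ^ 3 + X 2 ^ 2} :
      Ideal (MvPolynomial (Fin 3) k))

/-! The ring is graded by giving `x`, `y`, `z` the weights `bc`, `ac`, `ab` (for the exponents
`a, b, c = 5, 3, 2`). The top homogeneous component of a nonzero locally nilpotent derivation is
again nonzero and locally nilpotent, so assume that `E` is homogeneous. Since the exponents are
pairwise coprime, a homogeneous element of nonzero degree is a product of powers of `x`, `y`, `z`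
and a binary form in `xᵃ` and `yᵇ`, and the latter splits into linear factors.

As `xᵃ` and `yᵇ` are linearly independent of the same degree, `E` kills a nonzero homogeneous
element of nonzero degree. The kernel of `E` is factorially closed, so it contains one of `x`, `y`,
`z`, or some `αxᵃ + βyᵇ ≠ 0`. In the latter case comparing degrees with respect to `E` gives
`E x = 0` or `E y = 0`, and the same comparison, applied to the defining equation, shows that `E`
kills all three generators as soon as it kills one. -/

section LocallyNilpotent

variable {R B : Type*} [CommRing R] [CommRing B] [Algebra R B] {D : Derivation R B B}

/-- Local nilpotency of a derivation: every element is killed by some iterate. -/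
def IsLocallyNilpotent (D : Derivation R B B) : Prop :=
  ∀ b, ∃ n : ℕ, D^[n] b = 0

theorem isLocallyNilpotent_iff_toLinearMap_pow :
    IsLocallyNilpotent D ↔ ∀ b, ∃ n : ℕ, (D.toLinearMap ^ n) b = 0 := by
  simp only [IsLocallyNilpotent, Module.End.pow_apply, Derivation.coeFn_coe]

/-- The degree function of a locally nilpotent derivation `D`: the largest `n` with `Dⁿ b ≠ 0`.
It is `0` on the kernel of `D`, including at `b = 0`. -/
noncomputable def nilDegree (D : Derivation R B B) (b : B) : ℕ :=
  sInf {n | D^[n + 1] b = 0}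

theorem derivation_iterate_eq_zero_of_le {n m : ℕ} {b : B} (hnm : n ≤ m) (hb : D^[n] b = 0) :
    D^[m] b = 0 := by
  rw [← Nat.sub_add_cancel hnm, Function.iterate_add_apply, hb, iterate_map_zero]

theorem derivation_iterate_smul (D : Derivation R B B) (n : ℕ) (r : R) (b : B) :
    D^[n] (r • b) = r • D^[n] b :=
  Function.Commute.iterate_left (g := (r • ·)) (D.map_smul r) n b

open Finset in
theorem derivation_iterate_mul (D : Derivation R B B) (n : ℕ) (a b : B) :
    D^[n] (a * b) = ∑ ij ∈ antidiagonal n, n.choose ij.1 • (D^[ij.1] a * D^[ij.2] b) := by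
  induction n with
  | zero => simp
  | succ n ih =>
    rw [sum_antidiagonal_choose_succ_nsmul (fun i j => D^[i] a * D^[j] b) n]
    simp only [Function.iterate_succ_apply', ih, map_sum, map_nsmul, D.leibniz, smul_eq_mul,
      smul_add, sum_add_distrib]
    congr 1
    refine sum_congr rfl fun ⟨i, j⟩ hij => ?_
    rw [n.choose_symm_of_eq_add (mem_antidiagonal.1 hij).symm, mul_comm]

theorem derivation_iterate_add_mul {p q : ℕ} {a b : B} (ha : D^[p + 1] a = 0)
    (hb : D^[q + 1] b = 0) :
    D^[p + q] (a * b) = (p + q).choose p • (D^[p] a * D^[q] b) := by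
  rw [derivation_iterate_mul, Finset.sum_eq_single_of_mem (p, q) (by simp)]
  rintro ⟨i, j⟩ hij hne
  have hsum : i + j = p + q := Finset.HasAntidiagonal.mem_antidiagonal.1 hij
  obtain hi | hj : p + 1 ≤ i ∨ q + 1 ≤ j := by grind
  · rw [derivation_iterate_eq_zero_of_le hi ha, zero_mul, nsmul_zero]
  · rw [derivation_iterate_eq_zero_of_le hj hb, mul_zero, nsmul_zero]

theorem derivation_iterate_succ_add_mul_eq_zero {p q : ℕ} {a b : B} (ha : D^[p + 1] a = 0)
    (hb : D^[q + 1] b = 0) : D^[p + q + 1] (a * b) = 0 := by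
  rw [Function.iterate_succ_apply', derivation_iterate_add_mul ha hb, map_nsmul, D.leibniz,
    ← Function.iterate_succ_apply' D, ← Function.iterate_succ_apply' D, ha, hb]
  simp

theorem nilDegree_eq {n : ℕ} {b : B} (hne : D^[n] b ≠ 0) (heq : D^[n + 1] b = 0) :
    nilDegree D b = n := by
  refine IsLeast.csInf_eq ⟨heq, fun m hm => ?_⟩
  by_contra! hlt
  exact hne (derivation_iterate_eq_zero_of_le hlt hm)

theorem nilDegree_eq_zero_of_apply_eq_zero {b : B} (hb : D b = 0) : nilDegree D b = 0 :=
  Nat.sInf_eq_zero.2 (Or.inl hb)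

theorem iterate_nilDegree_ne_zero {b : B} (hb : b ≠ 0) : D^[nilDegree D b] b ≠ 0 := by
  intro h
  cases hn : nilDegree D b with
  | zero => exact hb (by rwa [hn] at h)
  | succ n =>
    have hlt : n < nilDegree D b := by omega
    exact Nat.notMem_of_lt_sInf hlt (by rwa [hn] at h)

namespace IsLocallyNilpotent

theorem iterate_nilDegree_succ (hD : IsLocallyNilpotent D) (b : B) :
    D^[nilDegree D b + 1] b = 0 := by
  obtain ⟨n, hn⟩ := hD b
  exact Nat.sInf_mem (s := {n | D^[n + 1] b = 0})
    ⟨n, derivation_iterate_eq_zero_of_le n.le_succ hn⟩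

theorem apply_eq_zero_iff (hD : IsLocallyNilpotent D) {b : B} : D b = 0 ↔ nilDegree D b = 0 := by
  refine ⟨nilDegree_eq_zero_of_apply_eq_zero, fun h => ?_⟩
  simpa [h] using hD.iterate_nilDegree_succ b

theorem nilDegree_apply_add_one (hD : IsLocallyNilpotent D) {b : B} (hb : D b ≠ 0) :
    nilDegree D (D b) + 1 = nilDegree D b :=
  (nilDegree_eq (n := nilDegree D (D b) + 1) (iterate_nilDegree_ne_zero hb)
    (hD.iterate_nilDegree_succ (D b))).symm

variable [IsDomain B] [CharZero B]

theorem nilDegree_mul (hD : IsLocallyNilpotent D) {a b : B} (ha : a ≠ 0) (hb : b ≠ 0) :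
    nilDegree D (a * b) = nilDegree D a + nilDegree D b := by
  have ha' := hD.iterate_nilDegree_succ a
  have hb' := hD.iterate_nilDegree_succ b
  refine nilDegree_eq ?_ (derivation_iterate_succ_add_mul_eq_zero ha' hb')
  rw [derivation_iterate_add_mul ha' hb']
  exact smul_ne_zero (Nat.choose_pos (Nat.le_add_right _ _)).ne'
    (mul_ne_zero (iterate_nilDegree_ne_zero ha) (iterate_nilDegree_ne_zero hb))

theorem apply_eq_zero_of_dvd (hD : IsLocallyNilpotent D) {a b : B} (hab : a ∣ b) (hb : b ≠ 0)
    (hDb : D b = 0) : D a = 0 := by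
  obtain ⟨c, rfl⟩ := hab
  have hmul := hD.nilDegree_mul (left_ne_zero_of_mul hb) (right_ne_zero_of_mul hb)
  rw [hD.apply_eq_zero_iff] at hDb ⊢
  omega

theorem apply_eq_zero_of_pow (hD : IsLocallyNilpotent D) {a : B} {n : ℕ} (hn : n ≠ 0)
    (h : D (a ^ n) = 0) : D a = 0 := by
  rcases eq_or_ne a 0 with rfl | ha
  · exact map_zero D
  · exact hD.apply_eq_zero_of_dvd (dvd_pow_self a hn) (pow_ne_zero n ha) h

variable {a b s t : B} {p q : ℕ}

/- If `F = s aᵖ + t b^q` is in the kernel, then differentiating and eliminating `b ^ (q - 1) * D b`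
shows that `a` divides `q F D b`, whose degree is one less than that of `b`. -/
theorem nilDegree_lt_of_apply_add_pow_eq_zero (hD : IsLocallyNilpotent D) (hs : D s = 0)
    (ht : D t = 0) (hp : 2 ≤ p) (hq : q ≠ 0) (hF : D (s * a ^ p + t * b ^ q) = 0)
    (hF0 : s * a ^ p + t * b ^ q ≠ 0) (hb : D b ≠ 0) : nilDegree D a < nilDegree D b := by
  obtain ⟨p, rfl⟩ := Nat.exists_eq_add_of_le' hp
  obtain ⟨q, rfl⟩ := Nat.exists_eq_succ_of_ne_zero hq
  set F := s * a ^ (p + 2) + t * b ^ (q + 1) with hF_def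
  set G := s * a ^ p * ((q + 1 : ℕ) * a * D b - (p + 2 : ℕ) * b * D a)
  have hdiff : s * ((p + 2 : ℕ) * (a ^ (p + 1) * D a)) +
      t * ((q + 1 : ℕ) * (b ^ q * D b)) = 0 := by
    simpa [hF_def, D.leibniz, D.leibniz_pow, hs, ht] using hF
  have hfactor : (q + 1) • F * D b = a * G := by
    rw [nsmul_eq_mul]
    linear_combination b * hdiff
  have hqF : (q + 1) • F ≠ 0 := smul_ne_zero q.succ_ne_zero hF0
  have haG : a * G ≠ 0 := hfactor ▸ mul_ne_zero hqF hb
  have hqF_deg : nilDegree D ((q + 1) • F) = 0 :=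
    nilDegree_eq_zero_of_apply_eq_zero (by rw [map_nsmul, hF, nsmul_zero])
  have hdeg : nilDegree D (D b) = nilDegree D a + nilDegree D G := by
    rw [← hD.nilDegree_mul (left_ne_zero_of_mul haG) (right_ne_zero_of_mul haG), ← hfactor,
      hD.nilDegree_mul hqF hb, hqF_deg, zero_add]
  have hDb := hD.nilDegree_apply_add_one hb
  omega

theorem apply_eq_zero_of_apply_add_pow_eq_zero (hD : IsLocallyNilpotent D) (hs : D s = 0)
    (ht : D t = 0) (hs0 : s ≠ 0) (hp : 2 ≤ p) (hq : 2 ≤ q)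
    (hF : D (s * a ^ p + t * b ^ q) = 0) (hF0 : s * a ^ p + t * b ^ q ≠ 0) : D a = 0 := by
  by_cases hb : D b = 0
  · refine hD.apply_eq_zero_of_pow (n := p) (by omega) ?_
    simpa [D.leibniz, D.leibniz_pow b, hs, ht, hb, hs0] using hF
  by_contra ha
  have hab := hD.nilDegree_lt_of_apply_add_pow_eq_zero hs ht hp (by omega) hF hF0 hb
  rw [add_comm] at hF hF0
  have hba := hD.nilDegree_lt_of_apply_add_pow_eq_zero ht hs hq (by omega) hF hF0 ha
  exact lt_asymm hab hba

theorem apply_eq_zero_of_pow_add_pow_add_pow_eq_zero (hD : IsLocallyNilpotent D) {x y z : B}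
    {r : ℕ} (hp : 2 ≤ p) (hq : 2 ≤ q) (hrel : x ^ r + y ^ p + z ^ q = 0) (hx0 : x ≠ 0)
    (hx : D x = 0) : D y = 0 ∧ D z = 0 := by
  have hF : y ^ p + z ^ q = -x ^ r := by linear_combination hrel
  have hF0 : y ^ p + z ^ q ≠ 0 := hF ▸ neg_ne_zero.2 (pow_ne_zero r hx0)
  have hDF : D (y ^ p + z ^ q) = 0 := by rw [hF]; simp [D.leibniz_pow, hx]
  constructor
  · exact hD.apply_eq_zero_of_apply_add_pow_eq_zero (s := 1) (t := 1) D.map_one_eq_zero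
      D.map_one_eq_zero one_ne_zero hp hq (by simpa using hDF) (by simpa using hF0)
  · rw [add_comm] at hF0 hDF
    exact hD.apply_eq_zero_of_apply_add_pow_eq_zero (s := 1) (t := 1) D.map_one_eq_zero
      D.map_one_eq_zero one_ne_zero hq hp (by simpa using hDF) (by simpa using hF0)

end IsLocallyNilpotent

end LocallyNilpotent

section HomogeneousComponents

open DirectSum

section Component

variable {ι R B : Type*} [AddCommGroup ι] [DecidableEq ι] [CommRing R] [CommRing B] [Algebra R B]
  (𝒜 : ι → Submodule R B) [GradedAlgebra 𝒜] (D : Derivation R B B)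

/-- The `R`-linear map underlying `homogeneousComponent 𝒜 D m`. -/
noncomputable def homogeneousComponentLinearMap (m : ι) : B →ₗ[R] B :=
  toModule R ι B (fun i => GradedAlgebra.proj 𝒜 (i + m) ∘ₗ D.toLinearMap ∘ₗ (𝒜 i).subtype) ∘ₗ
    (decomposeLinearEquiv 𝒜).toLinearMap

variable {𝒜 D} {a b : B} {i m : ι}

theorem homogeneousComponentLinearMap_apply (ha : a ∈ 𝒜 i) :
    homogeneousComponentLinearMap 𝒜 D m a = decompose 𝒜 (D a) (i + m) := by
  lift a to 𝒜 i using ha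
  simp [homogeneousComponentLinearMap]

theorem homogeneousComponentLinearMap_mul (a b : B) :
    homogeneousComponentLinearMap 𝒜 D m (a * b) =
      a • homogeneousComponentLinearMap 𝒜 D m b + b • homogeneousComponentLinearMap 𝒜 D m a := by
  induction a using Decomposition.inductionOn 𝒜 with
  | zero => simp
  | add a a' ha ha' => simp only [add_mul, map_add, ha, ha', smul_eq_mul, mul_add]; ring
  | @homogeneous i a =>
    induction b using Decomposition.inductionOn 𝒜 with
    | zero => simp
    | add b b' hb hb' => simp only [mul_add, map_add, hb, hb', smul_eq_mul, add_mul]; ring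
    | @homogeneous j b =>
      rw [homogeneousComponentLinearMap_apply (SetLike.mul_mem_graded a.2 b.2),
        homogeneousComponentLinearMap_apply a.2, homogeneousComponentLinearMap_apply b.2,
        D.leibniz, decompose_add, DirectSum.add_apply, Submodule.coe_add]
      simp only [smul_eq_mul]
      congr 1
      · rw [add_assoc, coe_decompose_mul_add_of_left_mem 𝒜 a.2]
      · rw [add_right_comm, add_comm _ j, coe_decompose_mul_add_of_left_mem 𝒜 b.2]

variable (𝒜 D) in
/-- The degree `m` component of a derivation `D` of a graded algebra: it sends a homogeneous
element `a` of degree `i` to the degree `i + m` component of `D a`. -/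
noncomputable def homogeneousComponent (m : ι) : Derivation R B B :=
  Derivation.mk' (homogeneousComponentLinearMap 𝒜 D m) homogeneousComponentLinearMap_mul

theorem homogeneousComponent_apply (ha : a ∈ 𝒜 i) :
    homogeneousComponent 𝒜 D m a = decompose 𝒜 (D a) (i + m) :=
  homogeneousComponentLinearMap_apply ha

theorem homogeneousComponent_apply_mem (ha : a ∈ 𝒜 i) :
    homogeneousComponent 𝒜 D m a ∈ 𝒜 (i + m) :=
  homogeneousComponent_apply ha ▸ SetLike.coe_mem _

theorem decompose_derivation_apply (ha : a ∈ 𝒜 i) (j : ι) :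
    (decompose 𝒜 (D a) j : B) = homogeneousComponent 𝒜 D (j - i) a := by
  rw [homogeneousComponent_apply ha, add_sub_cancel]

open Classical in
theorem coe_decompose_derivation (b : B) (j : ι) :
    (decompose 𝒜 (D b) j : B) =
      ∑ l ∈ (decompose 𝒜 b).support, homogeneousComponent 𝒜 D (j - l) (decompose 𝒜 b l) := by
  conv_lhs => rw [← sum_support_decompose 𝒜 b, map_sum, decompose_sum, DirectSum.sum_apply]
  rw [AddSubmonoidClass.coe_finsetSum]
  exact Finset.sum_congr rfl fun l _ => decompose_derivation_apply (decompose 𝒜 b l).2 j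

theorem finite_homogeneousComponent_apply_ne_zero (b : B) :
    {m | homogeneousComponent 𝒜 D m b ≠ 0}.Finite := by
  classical
  induction b using Decomposition.inductionOn 𝒜 with
  | zero => simp
  | add b b' hb hb' =>
    refine (hb.union hb').subset fun m hm => ?_
    by_contra! h
    simp_all
  | @homogeneous i b =>
    refine ((decompose 𝒜 (D b)).support.finite_toSet.preimage
      (add_right_injective i).injOn).subset fun m hm => ?_
    rw [Set.mem_ofPred_eq, homogeneousComponent_apply b.2] at hm
    simpa [DFinsupp.mem_support_iff] using hm

theorem finite_homogeneousComponent_ne_zero [Algebra.FiniteType R B] :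
    {m | homogeneousComponent 𝒜 D m ≠ 0}.Finite := by
  obtain ⟨S, hS⟩ := Algebra.FiniteType.out (R := R) (A := B)
  refine (S.finite_toSet.biUnion fun b _ =>
    finite_homogeneousComponent_apply_ne_zero (𝒜 := 𝒜) (D := D) b).subset fun m hm => ?_
  by_contra h
  refine hm (Derivation.ext_of_adjoin_eq_top _ hS fun b hb => ?_)
  simpa using fun hne => h (Set.mem_biUnion hb hne)

theorem exists_homogeneousComponent_ne_zero (hD : D ≠ 0) :
    ∃ m, homogeneousComponent 𝒜 D m ≠ 0 := by
  by_contra! h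
  refine hD (Derivation.ext fun b => ?_)
  induction b using Decomposition.inductionOn 𝒜 with
  | zero => simp
  | add b b' hb hb' => simp [hb, hb']
  | homogeneous b =>
    refine (decompose 𝒜).injective (DFinsupp.ext fun j => Subtype.ext ?_)
    rw [decompose_derivation_apply b.2, h]
    simp

theorem IsLocallyNilpotent.of_forall_homogeneous {E : Derivation R B B}
    (hE : ∀ i, ∀ a ∈ 𝒜 i, ∃ n : ℕ, E^[n] a = 0) : IsLocallyNilpotent E := by
  intro b
  induction b using Decomposition.inductionOn 𝒜 with
  | zero => exact ⟨0, rfl⟩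
  | @homogeneous i b => exact hE i b b.2
  | add b b' hb hb' =>
    obtain ⟨n, hn⟩ := hb
    obtain ⟨n', hn'⟩ := hb'
    exact ⟨max n n', by rw [iterate_map_add, derivation_iterate_eq_zero_of_le (le_max_left n n') hn,
      derivation_iterate_eq_zero_of_le (le_max_right n n') hn', add_zero]⟩

end Component

section Ordered

variable {ι R B : Type*} [AddCommGroup ι] [LinearOrder ι] [IsOrderedAddMonoid ι] [CommRing R]
  [CommRing B] [Algebra R B] {𝒜 : ι → Submodule R B} [GradedAlgebra 𝒜] {D : Derivation R B B}

theorem decompose_derivation_eq_zero_of_lt {i m : ι}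
    (hm : ∀ l, m < l → homogeneousComponent 𝒜 D l = 0) {b : B}
    (hb : ∀ l, i < l → decompose 𝒜 b l = 0) {j : ι} (hj : i + m < j) :
    decompose 𝒜 (D b) j = 0 := by
  classical
  refine Subtype.ext ?_
  rw [coe_decompose_derivation, ZeroMemClass.coe_zero]
  refine Finset.sum_eq_zero fun l hl => ?_
  have hli : l ≤ i := le_of_not_gt fun h => DFinsupp.mem_support_iff.1 hl (hb l h)
  have hml : m < j - l := lt_sub_iff_add_lt'.2 ((add_le_add_left hli m).trans_lt hj)
  rw [hm _ hml, Derivation.zero_apply]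

theorem coe_decompose_derivation_add {i m : ι}
    (hm : ∀ l, m < l → homogeneousComponent 𝒜 D l = 0) {b : B}
    (hb : ∀ l, i < l → decompose 𝒜 b l = 0) :
    (decompose 𝒜 (D b) (i + m) : B) = homogeneousComponent 𝒜 D m (decompose 𝒜 b i) := by
  classical
  rw [coe_decompose_derivation, Finset.sum_eq_single i, add_sub_cancel_left]
  · intro l hl hne
    have hli : l ≤ i := le_of_not_gt fun h => DFinsupp.mem_support_iff.1 hl (hb l h)
    have hml : m < i + m - l :=
      lt_sub_iff_add_lt'.2 (add_lt_add_left (lt_of_le_of_ne hli hne) m)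
    rw [hm _ hml, Derivation.zero_apply]
  · intro hi
    rw [DFinsupp.notMem_support_iff.1 hi, ZeroMemClass.coe_zero, map_zero]

theorem decompose_iterate_derivation_of_mem {i m : ι}
    (hm : ∀ l, m < l → homogeneousComponent 𝒜 D l = 0) {a : B} (ha : a ∈ 𝒜 i) (n : ℕ) :
    (∀ j, i + n • m < j → decompose 𝒜 (D^[n] a) j = 0) ∧
      (decompose 𝒜 (D^[n] a) (i + n • m) : B) = (homogeneousComponent 𝒜 D m)^[n] a := by
  induction n with
  | zero =>
    rw [zero_smul, add_zero]
    exact ⟨fun j hj => Subtype.ext (decompose_of_mem_ne 𝒜 ha hj.ne), decompose_of_mem_same 𝒜 ha⟩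
  | succ n ih =>
    obtain ⟨habove, htop⟩ := ih
    rw [succ_nsmul, ← add_assoc, Function.iterate_succ_apply', Function.iterate_succ_apply']
    refine ⟨fun j hj => decompose_derivation_eq_zero_of_lt hm habove hj, ?_⟩
    rw [coe_decompose_derivation_add hm habove, htop]

theorem IsLocallyNilpotent.homogeneousComponent {m : ι} (hD : IsLocallyNilpotent D)
    (hm : ∀ l, m < l → homogeneousComponent 𝒜 D l = 0) :
    IsLocallyNilpotent (homogeneousComponent 𝒜 D m) := by
  refine .of_forall_homogeneous (𝒜 := 𝒜) fun i a ha => ?_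
  obtain ⟨n, hn⟩ := hD a
  refine ⟨n, ?_⟩
  rw [← (decompose_iterate_derivation_of_mem hm ha n).2, hn, decompose_zero]
  rfl

theorem IsLocallyNilpotent.exists_homogeneous [Algebra.FiniteType R B]
    (hD : IsLocallyNilpotent D) (hD0 : D ≠ 0) (𝒜 : ι → Submodule R B) [GradedAlgebra 𝒜] :
    ∃ (E : Derivation R B B) (m : ι), IsLocallyNilpotent E ∧ E ≠ 0 ∧
      ∀ i, ∀ a ∈ 𝒜 i, E a ∈ 𝒜 (i + m) := by
  obtain ⟨m, hm0, hm⟩ := Set.exists_max_image _ id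
    (finite_homogeneousComponent_ne_zero (𝒜 := 𝒜) (D := D))
    (exists_homogeneousComponent_ne_zero hD0)
  refine ⟨_root_.homogeneousComponent 𝒜 D m, m, hD.homogeneousComponent fun l hl => ?_, hm0,
    fun i a ha => homogeneousComponent_apply_mem ha⟩
  by_contra hl0
  exact hl.not_ge (hm l hl0)

end Ordered

end HomogeneousComponents

section HomogeneousKernel

variable {ι R B : Type*} [AddCommGroup ι] [CommRing R] [CommRing B] [Algebra R B]
  {𝒜 : ι → Submodule R B} {E : Derivation R B B} {m : ι}

theorem iterate_mem_of_homogeneous (hE : ∀ i, ∀ a ∈ 𝒜 i, E a ∈ 𝒜 (i + m)) {i : ι} {a : B}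
    (ha : a ∈ 𝒜 i) (n : ℕ) : E^[n] a ∈ 𝒜 (i + n • m) := by
  induction n with
  | zero => simpa using ha
  | succ n ih =>
    rw [Function.iterate_succ_apply', succ_nsmul, ← add_assoc]
    exact hE _ _ ih

theorem IsLocallyNilpotent.add_nilDegree_smul_eq_zero_of_ker (hnil : IsLocallyNilpotent E)
    (hE : ∀ i, ∀ a ∈ 𝒜 i, E a ∈ 𝒜 (i + m)) (hker : ∀ d ≠ 0, ∀ f ∈ 𝒜 d, f ≠ 0 → E f ≠ 0)
    {i : ι} {a : B} (ha : a ∈ 𝒜 i) (ha0 : a ≠ 0) : i + nilDegree E a • m = 0 := by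
  by_contra hd
  refine hker _ hd _ (iterate_mem_of_homogeneous hE ha _) (iterate_nilDegree_ne_zero ha0) ?_
  rw [← Function.iterate_succ_apply' E]
  exact hnil.iterate_nilDegree_succ a

/- If the kernel met only degree zero, the last nonzero iterates of all elements of `𝒜 N` would
occur at the same step and be scalars, so a combination of `u` and `v` would vanish one step too
early. -/
theorem IsLocallyNilpotent.exists_homogeneous_mem_ker [Nontrivial R] [IsAddTorsionFree ι]
    (hnil : IsLocallyNilpotent E) (hE : ∀ i, ∀ a ∈ 𝒜 i, E a ∈ 𝒜 (i + m)) (h0 : 𝒜 0 ≤ 1)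
    {N : ι} (hN : N ≠ 0) {u v : B} (hu : u ∈ 𝒜 N) (hv : v ∈ 𝒜 N)
    (huv : LinearIndependent R ![u, v]) :
    ∃ d ≠ 0, ∃ f ∈ 𝒜 d, f ≠ 0 ∧ E f = 0 := by
  by_contra! hker
  have last_iterate : ∀ w ∈ 𝒜 N, w ≠ 0 → N + nilDegree E w • m = 0 := fun w hw hw0 =>
    hnil.add_nilDegree_smul_eq_zero_of_ker hE hker hw hw0
  set t := nilDegree E u
  have ht : N + t • m = 0 := last_iterate u hu (huv.ne_zero 0)
  have hm : m ≠ 0 := by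
    rintro rfl
    exact hN (by simpa using ht)
  have hscalar : ∀ w ∈ 𝒜 N, ∃ r, algebraMap R B r = E^[t] w := fun w hw =>
    Submodule.mem_one.1 (h0 (ht ▸ iterate_mem_of_homogeneous hE hw t))
  obtain ⟨r, hr⟩ := hscalar u hu
  obtain ⟨s, hs⟩ := hscalar v hv
  have hr0 : r ≠ 0 := by
    rintro rfl
    exact iterate_nilDegree_ne_zero (huv.ne_zero 0) (hr.symm.trans (map_zero _))
  set w := s • u + (-r) • v
  have hw0 : w ≠ 0 := fun h => hr0 (neg_eq_zero.1 (LinearIndependent.pair_iff.1 huv s (-r) h).2)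
  have hw : w ∈ 𝒜 N := add_mem ((𝒜 N).smul_mem _ hu) ((𝒜 N).smul_mem _ hv)
  have hEw : E^[t] w = 0 := by
    rw [iterate_map_add, derivation_iterate_smul, derivation_iterate_smul, ← hr, ← hs]
    simp [Algebra.smul_def, mul_comm]
  have heq : nilDegree E w = t :=
    injective_nsmul_iff_not_isOfFinAddOrder.2 (not_isOfFinAddOrder_of_isAddTorsionFree hm)
      (add_left_cancel ((last_iterate w hw hw0).trans ht.symm))
  exact iterate_nilDegree_ne_zero hw0 (heq ▸ hEw)

end HomogeneousKernel

section QuotientGrading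

open DirectSum

variable {ι R A : Type*} [CommRing R] [CommRing A] [Algebra R A]

/-- The images in `A ⧸ I` of the graded pieces of `A`. They form a grading when `I` is
homogeneous, see `quotientGradedAlgebra`. -/
def quotientGrading (𝒜 : ι → Submodule R A) (I : Ideal A) (i : ι) : Submodule R (A ⧸ I) :=
  (𝒜 i).map (Ideal.Quotient.mkₐ R I).toLinearMap

variable {𝒜 : ι → Submodule R A} {I : Ideal A}

theorem mk_mem_quotientGrading {i : ι} {a : A} (ha : a ∈ 𝒜 i) :
    Ideal.Quotient.mk I a ∈ quotientGrading 𝒜 I i :=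
  Submodule.mem_map_of_mem ha

instance quotientGrading_gradedMonoid [AddMonoid ι] [SetLike.GradedMonoid 𝒜] :
    SetLike.GradedMonoid (quotientGrading 𝒜 I) where
  one_mem := mk_mem_quotientGrading SetLike.GradedOne.one_mem
  mul_mem := by
    rintro i j _ _ ⟨a, ha, rfl⟩ ⟨b, hb, rfl⟩
    exact mk_mem_quotientGrading (SetLike.mul_mem_graded ha hb)

variable [DecidableEq ι] [AddMonoid ι] [GradedAlgebra 𝒜]

variable (𝒜 I) in
/-- Decomposes an element of `A` and reduces its homogeneous components modulo `I`. -/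
noncomputable def quotientDecompose : A →+ ⨁ i, quotientGrading 𝒜 I i :=
  (DirectSum.map fun i =>
    ((Ideal.Quotient.mkₐ R I).toLinearMap.submoduleMap (𝒜 i)).toAddMonoidHom).comp
    (decomposeAddEquiv 𝒜).toAddMonoidHom

theorem coe_quotientDecompose_apply (a : A) (i : ι) :
    (quotientDecompose 𝒜 I a i : A ⧸ I) = Ideal.Quotient.mk I (decompose 𝒜 a i) :=
  rfl

theorem quotientDecompose_of_mem {i : ι} {a : A} (ha : a ∈ 𝒜 i) :
    quotientDecompose 𝒜 I a = of _ i ⟨Ideal.Quotient.mk I a, mk_mem_quotientGrading ha⟩ := by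
  change DirectSum.map _ (decompose 𝒜 a) = _
  rw [decompose_of_mem 𝒜 ha, DirectSum.map_of]
  rfl

theorem quotientDecompose_eq_zero (hI : I.IsHomogeneous 𝒜) {a : A} (ha : a ∈ I) :
    quotientDecompose 𝒜 I a = 0 :=
  DFinsupp.ext fun i => Subtype.ext <| by
    rw [coe_quotientDecompose_apply]
    exact Ideal.Quotient.eq_zero_iff_mem.2 (hI i ha)

theorem coeAddMonoidHom_quotientDecompose (a : A) :
    DirectSum.coeAddMonoidHom (quotientGrading 𝒜 I) (quotientDecompose 𝒜 I a) =
      Ideal.Quotient.mk I a := by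
  induction a using Decomposition.inductionOn 𝒜 with
  | zero => simp only [map_zero]
  | add a b ha hb => simp only [map_add, ha, hb]
  | homogeneous a => rw [quotientDecompose_of_mem a.2, coeAddMonoidHom_of]

/-- The grading of the quotient of a graded algebra by a homogeneous ideal. -/
noncomputable abbrev quotientGradedAlgebra (hI : I.IsHomogeneous 𝒜) :
    GradedAlgebra (quotientGrading 𝒜 I) :=
  let decomposeQuotient : A ⧸ I →+ ⨁ i, quotientGrading 𝒜 I i :=
    QuotientAddGroup.lift I.toAddSubgroup (quotientDecompose 𝒜 I) fun _ =>
      quotientDecompose_eq_zero hI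
  { quotientGrading_gradedMonoid with
    decompose' := decomposeQuotient
    left_inv := Ideal.Quotient.mk_surjective.forall.2 coeAddMonoidHom_quotientDecompose
    right_inv := fun x => by
      induction x using DirectSum.induction_on with
      | zero => rw [map_zero, map_zero]
      | add x y hx hy => rw [map_add, map_add, hx, hy]
      | of i x =>
        obtain ⟨_, a, ha, rfl⟩ := x
        rw [coeAddMonoidHom_of]
        exact quotientDecompose_of_mem ha }

end QuotientGrading

section Polynomials

theorem irreducible_X_pow_add_C_of_prime {R : Type*} [CommRing R] [IsDomain R] {n : ℕ}
    (hn : n ≠ 0) {r π : R} (hπ : Prime π) (hdvd : π ∣ r) (hsq : ¬ π ^ 2 ∣ r) :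
    Irreducible (Polynomial.X ^ n + Polynomial.C r) := by
  have hmonic := Polynomial.monic_X_pow_add_C r hn
  have hdeg := Polynomial.degree_X_pow_add_C (Nat.pos_of_ne_zero hn) r
  refine Polynomial.irreducible_of_eisenstein_criterion
    ((Ideal.span_singleton_prime hπ.ne_zero).2 hπ) ?_ (fun m hm => ?_) ?_ ?_ hmonic.isPrimitive
  · rw [hmonic.leadingCoeff, Ideal.mem_span_singleton]
    exact hπ.not_dvd_one
  · have hmn : m ≠ n := by
      rintro rfl
      exact hm.ne hdeg.symm
    rw [Ideal.mem_span_singleton, Polynomial.coeff_add, Polynomial.coeff_X_pow, if_neg hmn,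
      Polynomial.coeff_C, zero_add]
    split_ifs
    · exact hdvd
    · exact dvd_zero π
  · rw [hdeg]
    exact_mod_cast Nat.pos_of_ne_zero hn
  · simpa [Ideal.span_singleton_pow, Ideal.mem_span_singleton, hn.symm] using hsq

open MvPolynomial

variable {k σ : Type*} [Field k]

theorem dvd_derivation_of_sq_dvd {R A : Type*} [CommRing R] [CommRing A] [Algebra R A]
    (D : Derivation R A A) {p f : A} (h : p ^ 2 ∣ f) : p ∣ D f := by
  obtain ⟨g, rfl⟩ := h
  exact ⟨p * D g + 2 * g * D p, by simp [D.leibniz, D.leibniz_pow]; ring⟩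

theorem not_sq_dvd_X_pow_add_X_pow [CharZero k] {i j : σ} (hij : i ≠ j) {b c : ℕ} (hb : b ≠ 0)
    (hc : c ≠ 0) {π : MvPolynomial σ k} (hπ : Prime π) : ¬ π ^ 2 ∣ X i ^ b + X j ^ c := by
  classical
  intro h
  have dvd_X : ∀ {l : σ} {n : ℕ}, n ≠ 0 →
      pderiv l (X i ^ b + X j ^ c : MvPolynomial σ k) = n • X l ^ (n - 1) → π ∣ X l := by
    intro l n hn hl
    have hdvd : π ∣ C (n : k) * X l ^ (n - 1) := by
      simpa [hl] using dvd_derivation_of_sq_dvd (pderiv l) h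
    exact hπ.dvd_of_dvd_pow (((Ne.isUnit (Nat.cast_ne_zero.2 hn)).map C).dvd_mul_left.1 hdvd)
  have hi : π ∣ X i := dvd_X hb (by simp [pderiv_X_of_ne hij.symm, Derivation.leibniz_pow])
  have hj : π ∣ X j := dvd_X hc (by simp [pderiv_X_of_ne hij, Derivation.leibniz_pow])
  have hij' : X i ∣ (X j : MvPolynomial σ k) :=
    (hπ.irreducible.associated_of_dvd X_prime.irreducible hi).symm.dvd.trans hj
  exact hij (X_dvd_X.1 hij')

theorem irreducible_X_pow_add_X_pow_add_X_pow [CharZero k] {a b c : ℕ} (ha : a ≠ 0) (hb : b ≠ 0)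
    (hc : c ≠ 0) : Irreducible (X 0 ^ a + X 1 ^ b + X 2 ^ c : MvPolynomial (Fin 3) k) := by
  set g : MvPolynomial (Fin 2) k := X 0 ^ b + X 1 ^ c
  have hg_unit : ¬ IsUnit g := fun h => by
    simpa [g, hb, hc] using h.map (eval (0 : Fin 2 → k))
  have hg_ne : g ≠ 0 := fun h => by
    simpa [g, hc] using congrArg (eval ![(1 : k), 0]) h
  obtain ⟨π, hπ, hdvd⟩ := WfDvdMonoid.exists_irreducible_factor hg_unit hg_ne
  have himage : finSuccEquiv k 2 (X 0 ^ a + X 1 ^ b + X 2 ^ c) =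
      Polynomial.X ^ a + Polynomial.C g := by
    rw [show (1 : Fin 3) = Fin.succ 0 from rfl, show (2 : Fin 3) = Fin.succ 1 from rfl]
    simp only [g, map_add, map_pow, finSuccEquiv_X_zero, finSuccEquiv_X_succ, add_assoc]
  rw [← MulEquiv.irreducible_iff (finSuccEquiv k 2), himage]
  exact irreducible_X_pow_add_C_of_prime ha hπ.prime hdvd
    (not_sq_dvd_X_pow_add_X_pow zero_ne_one hb hc hπ.prime)

theorem exists_linear_dvd_of_isHomogeneous [IsAlgClosed k] {n : ℕ} (hn : n ≠ 0)
    {P : MvPolynomial (Fin 2) k} (hP : P.IsHomogeneous n) :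
    ∃ α β : k, (α ≠ 0 ∨ β ≠ 0) ∧ C α * X 0 + C β * X 1 ∣ P := by
  obtain ⟨n, rfl⟩ := Nat.exists_eq_succ_of_ne_zero hn
  set p := aeval ![(Polynomial.X : Polynomial k), 1] P
  have hP' : p.homogenize (n + 1) = P := Polynomial.homogenize_eq_of_isHomogeneous hP rfl
  have hdeg : p.natDegree ≤ n + 1 := by
    simpa using aeval_natDegree_le P hP.totalDegree_le ![(Polynomial.X : Polynomial k), 1]
      (n := 1) (by simp)
  rcases hdeg.lt_or_eq with hlt | heq
  · refine ⟨0, 1, Or.inr one_ne_zero, p.homogenize n, ?_⟩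
    rw [← hP', ← one_mul p, add_comm n 1, Polynomial.homogenize_mul 1 p (by simp) (by omega)]
    simp
  · obtain ⟨r, hr⟩ := IsAlgClosed.exists_root p
      (Polynomial.natDegree_pos_iff_degree_pos.1 (by omega)).ne'
    set q := p /ₘ (Polynomial.X - Polynomial.C r)
    have hq : (Polynomial.X - Polynomial.C r) * q = p :=
      Polynomial.mul_divByMonic_eq_iff_isRoot.2 hr
    have hqdeg : q.natDegree ≤ n := by
      rw [Polynomial.natDegree_divByMonic _ (Polynomial.monic_X_sub_C r),
        Polynomial.natDegree_X_sub_C, heq, Nat.add_sub_cancel]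
    refine ⟨1, -r, Or.inl one_ne_zero, q.homogenize n, ?_⟩
    rw [← hP', ← hq, add_comm n 1,
      Polynomial.homogenize_mul _ _ (Polynomial.natDegree_X_sub_C r).le hqdeg]
    simp [sub_eq_add_neg]

end Polynomials

section ArithmeticOfWeights

variable {a b c i j l i' j' l' : ℕ}

theorem modEq_of_weighted_sum_eq (hab : a.Coprime b) (hac : a.Coprime c)
    (h : b * c * i + a * c * j + a * b * l = b * c * i' + a * c * j' + a * b * l') :
    i ≡ i' [MOD a] := by
  refine Nat.ModEq.cancel_left_of_coprime (c := b * c) (hab.mul_right hac) ?_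
  have hl : a * c * j + a * b * l ≡ a * c * j' + a * b * l' [MOD a] :=
    Nat.ModEq.trans (b := 0) (Nat.modEq_zero_iff_dvd.2 ⟨c * j + b * l, by ring⟩)
      (Nat.modEq_zero_iff_dvd.2 ⟨c * j' + b * l', by ring⟩).symm
  refine Nat.ModEq.add_right_cancel hl ?_
  rw [← add_assoc, ← add_assoc, h]

theorem weighted_sum_eq_add_sum_div :
    b * c * i + a * c * j + a * b * l =
      b * c * (i % a) + a * c * (j % b) + a * b * (l % c) +
        a * b * c * (i / a + j / b + l / c) := by
  conv_lhs => rw [← Nat.mod_add_div i a, ← Nat.mod_add_div j b, ← Nat.mod_add_div l c]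
  ring

theorem mod_eq_and_sum_div_eq_of_weighted_sum_eq (ha : a ≠ 0) (hb : b ≠ 0) (hc : c ≠ 0)
    (hab : a.Coprime b) (hac : a.Coprime c) (hbc : b.Coprime c)
    (h : b * c * i + a * c * j + a * b * l = b * c * i' + a * c * j' + a * b * l') :
    i % a = i' % a ∧ j % b = j' % b ∧ l % c = l' % c ∧
      i / a + j / b + l / c = i' / a + j' / b + l' / c := by
  have hi : i % a = i' % a := modEq_of_weighted_sum_eq hab hac h
  have hj : j % b = j' % b := modEq_of_weighted_sum_eq (j := i) (l := l) (j' := i') (l' := l')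
    hab.symm hbc (by linarith)
  have hl : l % c = l' % c := modEq_of_weighted_sum_eq (j := i) (l := j) (j' := i') (l' := j')
    hac.symm hbc.symm (by linarith)
  refine ⟨hi, hj, hl, ?_⟩
  rw [weighted_sum_eq_add_sum_div, weighted_sum_eq_add_sum_div (i := i'), hi, hj, hl] at h
  exact mul_left_cancel₀ (mul_ne_zero (mul_ne_zero ha hb) hc) (add_left_cancel h)

end ArithmeticOfWeights

open MvPolynomial in
/-- The coordinate ring `k[x, y, z]/(xᵃ + yᵇ + zᶜ)` of a Pham–Brieskorn surface. -/
noncomputable abbrev PhamBrieskornRing (k : Type*) [Field k] (a b c : ℕ) : Type _ :=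
  MvPolynomial (Fin 3) k ⧸
    (Ideal.span {(X 0 : MvPolynomial (Fin 3) k) ^ a + X 1 ^ b + X 2 ^ c} :
      Ideal (MvPolynomial (Fin 3) k))

namespace PhamBrieskornRing

open MvPolynomial

variable {k : Type*} [Field k] {a b c : ℕ}

/-- The class of the first variable. -/
noncomputable def x : PhamBrieskornRing k a b c := Ideal.Quotient.mk _ (X 0)

/-- The class of the second variable. -/
noncomputable def y : PhamBrieskornRing k a b c := Ideal.Quotient.mk _ (X 1)

/-- The class of the third variable. -/
noncomputable def z : PhamBrieskornRing k a b c := Ideal.Quotient.mk _ (X 2)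

theorem x_pow_add_y_pow_add_z_pow :
    (x ^ a + y ^ b + z ^ c : PhamBrieskornRing k a b c) = 0 := by
  simp only [x, y, z, ← map_pow, ← map_add]
  exact Ideal.Quotient.eq_zero_iff_mem.2 (Ideal.mem_span_singleton_self _)

theorem isDomain [CharZero k] (ha : a ≠ 0) (hb : b ≠ 0) (hc : c ≠ 0) :
    IsDomain (PhamBrieskornRing k a b c) := by
  have hirr := irreducible_X_pow_add_X_pow_add_X_pow (k := k) ha hb hc
  have := (Ideal.span_singleton_prime hirr.ne_zero).2 hirr.prime
  exact Ideal.Quotient.isDomain _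

theorem derivation_eq_zero
    {E : Derivation k (PhamBrieskornRing k a b c) (PhamBrieskornRing k a b c)}
    (hx : E x = 0) (hy : E y = 0) (hz : E z = 0) : E = 0 := by
  set I := Ideal.span {(X 0 : MvPolynomial (Fin 3) k) ^ a + X 1 ^ b + X 2 ^ c}
  have hgen : Algebra.adjoin k (Ideal.Quotient.mkₐ k I '' Set.range X) = ⊤ := by
    rw [Algebra.adjoin_image, adjoin_range_X, Algebra.map_top, AlgHom.range_eq_top]
    exact Ideal.Quotient.mkₐ_surjective k I
  refine Derivation.ext_of_adjoin_eq_top _ hgen ?_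
  rintro _ ⟨_, ⟨v, rfl⟩, rfl⟩
  fin_cases v
  exacts [hx, hy, hz]

/-- Evaluation at a point of the surface. -/
noncomputable def evalAt (p : Fin 3 → k) (hp : p 0 ^ a + p 1 ^ b + p 2 ^ c = 0) :
    PhamBrieskornRing k a b c →ₐ[k] k :=
  Ideal.Quotient.liftₐ _ (aeval p) fun f hf => by
    obtain ⟨g, rfl⟩ := Ideal.mem_span_singleton.1 hf
    simp [hp]

theorem evalAt_x (p : Fin 3 → k) (hp : p 0 ^ a + p 1 ^ b + p 2 ^ c = 0) :
    evalAt p hp x = p 0 := by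
  simp [evalAt, x]

theorem evalAt_y (p : Fin 3 → k) (hp : p 0 ^ a + p 1 ^ b + p 2 ^ c = 0) :
    evalAt p hp y = p 1 := by
  simp [evalAt, y]

theorem linearIndependent_x_pow_y_pow [IsAlgClosed k] (ha : a ≠ 0) (hb : b ≠ 0) (hc : c ≠ 0) :
    LinearIndependent k ![(x ^ a : PhamBrieskornRing k a b c), y ^ b] := by
  obtain ⟨ζ, hζ⟩ := IsAlgClosed.exists_pow_nat_eq (-1 : k) (Nat.pos_of_ne_zero hc)
  refine LinearIndependent.pair_iff.2 fun s t hst => ⟨?_, ?_⟩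
  · have h := congrArg (evalAt ![1, 0, ζ] (by simp [hζ, hb])) hst
    rw [map_add, map_smul, map_smul, map_pow, map_pow, evalAt_x, evalAt_y] at h
    simpa [hb] using h
  · have h := congrArg (evalAt ![0, 1, ζ] (by simp [hζ, ha])) hst
    rw [map_add, map_smul, map_smul, map_pow, map_pow, evalAt_x, evalAt_y] at h
    simpa [ha] using h

theorem x_ne_zero [IsAlgClosed k] (ha : a ≠ 0) (hb : b ≠ 0) (hc : c ≠ 0) :
    (x : PhamBrieskornRing k a b c) ≠ 0 :=
  ne_zero_pow ha ((linearIndependent_x_pow_y_pow (k := k) ha hb hc).ne_zero 0)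

theorem y_ne_zero [IsAlgClosed k] (ha : a ≠ 0) (hb : b ≠ 0) (hc : c ≠ 0) :
    (y : PhamBrieskornRing k a b c) ≠ 0 :=
  ne_zero_pow hb ((linearIndependent_x_pow_y_pow (k := k) ha hb hc).ne_zero 1)

theorem z_ne_zero [IsAlgClosed k] (ha : a ≠ 0) (hb : b ≠ 0) (hc : c ≠ 0) :
    (z : PhamBrieskornRing k a b c) ≠ 0 := by
  intro hz
  have hsum : (1 : k) • (x ^ a : PhamBrieskornRing k a b c) + (1 : k) • y ^ b = 0 := by
    simpa [hz, hc] using x_pow_add_y_pow_add_z_pow (k := k) (a := a) (b := b) (c := c)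
  exact one_ne_zero (LinearIndependent.pair_iff.1
    (linearIndependent_x_pow_y_pow ha hb hc) 1 1 hsum).1

theorem algebraMap_mul_x_pow_add_ne_zero [IsAlgClosed k] (ha : a ≠ 0) (hb : b ≠ 0)
    (hc : c ≠ 0) {α β : k} (hαβ : α ≠ 0 ∨ β ≠ 0) :
    (algebraMap k _ α * x ^ a + algebraMap k _ β * y ^ b : PhamBrieskornRing k a b c) ≠ 0 := by
  intro h
  have hsum : (α • x ^ a + β • y ^ b : PhamBrieskornRing k a b c) = 0 :=
    (congrArg₂ (· + ·) (Algebra.smul_def α _) (Algebra.smul_def β _)).trans h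
  obtain ⟨hα, hβ⟩ := LinearIndependent.pair_iff.1 (linearIndependent_x_pow_y_pow ha hb hc) α β hsum
  exact hαβ.elim (· hα) (· hβ)

variable (a b c) in
/-- The weights `bc`, `ac`, `ab` of the three variables, for which the defining equation is
homogeneous of degree `abc`. They are integers because a derivation may lower degrees. -/
def weight : Fin 3 → ℤ := ![b * c, a * c, a * b]

theorem isWeightedHomogeneous_X_pow_add_X_pow_add_X_pow :
    IsWeightedHomogeneous (weight a b c) (X 0 ^ a + X 1 ^ b + X 2 ^ c : MvPolynomial (Fin 3) k)
      (a * b * c) := by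
  have hX {v : Fin 3} {n : ℕ} (h : n * weight a b c v = a * b * c) :
      IsWeightedHomogeneous (weight a b c) (X v ^ n : MvPolynomial (Fin 3) k) (a * b * c) := by
    simpa [nsmul_eq_mul, h] using (isWeightedHomogeneous_X k (weight a b c) v).pow n
  refine ((hX ?_).add (hX ?_)).add (hX ?_) <;> simp only [weight, Matrix.cons_val] <;> ring

variable (k a b c) in
/-- The `ℤ`-grading in which `x`, `y` and `z` have degrees `bc`, `ac` and `ab`. -/
noncomputable def grading : ℤ → Submodule k (PhamBrieskornRing k a b c) :=
  quotientGrading (weightedHomogeneousSubmodule k (weight a b c)) _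

noncomputable instance gradedAlgebra : GradedAlgebra (grading k a b c) :=
  letI := weightedGradedAlgebra k (weight a b c)
  quotientGradedAlgebra <| Ideal.homogeneous_span _ _ <| by
    rintro _ rfl
    exact ⟨_, isWeightedHomogeneous_X_pow_add_X_pow_add_X_pow⟩

theorem x_mem_grading : x ∈ grading k a b c (b * c) :=
  mk_mem_quotientGrading (isWeightedHomogeneous_X k (weight a b c) 0)

theorem y_mem_grading : y ∈ grading k a b c (a * c) :=
  mk_mem_quotientGrading (isWeightedHomogeneous_X k (weight a b c) 1)

theorem x_pow_mem_grading : x ^ a ∈ grading k a b c (a * b * c) := by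
  have h := SetLike.pow_mem_graded a (x_mem_grading (k := k) (a := a) (b := b) (c := c))
  rwa [nsmul_eq_mul, ← mul_assoc] at h

theorem y_pow_mem_grading : y ^ b ∈ grading k a b c (a * b * c) := by
  have h := SetLike.pow_mem_graded b (y_mem_grading (k := k) (a := a) (b := b) (c := c))
  rwa [nsmul_eq_mul, ← mul_assoc, mul_comm (b : ℤ)] at h

theorem exists_monomial_eq_mul_aeval (i j l : ℕ) :
    ∃ P : MvPolynomial (Fin 2) k, P.IsHomogeneous (i / a + j / b + l / c) ∧
      (x ^ i * y ^ j * z ^ l : PhamBrieskornRing k a b c) =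
        x ^ (i % a) * y ^ (j % b) * z ^ (l % c) * aeval ![x ^ a, y ^ b] P := by
  refine ⟨X 0 ^ (i / a) * X 1 ^ (j / b) * (-(X 0 + X 1)) ^ (l / c), ?_, ?_⟩
  · have hX (v : Fin 2) := isHomogeneous_X k v
    simpa using (((hX 0).pow (i / a)).mul ((hX 1).pow (j / b))).mul
      (((hX 0).add (hX 1)).neg.pow (l / c))
  · have hz : (-(x ^ a + y ^ b) : PhamBrieskornRing k a b c) = z ^ c := by
      linear_combination -x_pow_add_y_pow_add_z_pow (k := k) (a := a) (b := b) (c := c)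
    simp only [map_mul, map_pow, map_neg, map_add, aeval_X, Matrix.cons_val_zero,
      Matrix.cons_val_one, hz, ← pow_mul]
    conv_lhs => rw [← Nat.mod_add_div i a, ← Nat.mod_add_div j b, ← Nat.mod_add_div l c]
    ring

theorem weight_eq (s : Fin 3 →₀ ℕ) :
    Finsupp.weight (weight a b c) s = (b * c * s 0 + a * c * s 1 + a * b * s 2 : ℕ) := by
  rw [Finsupp.weight_apply, Finsupp.sum_fintype _ _ (by simp), Fin.sum_univ_three]
  simp only [weight, nsmul_eq_mul, Matrix.cons_val]
  push_cast
  ring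

theorem mk_monomial (s : Fin 3 →₀ ℕ) (r : k) :
    (Ideal.Quotient.mk _ (monomial s r) : PhamBrieskornRing k a b c) =
      r • (x ^ s 0 * y ^ s 1 * z ^ s 2) := by
  rw [monomial_eq, Finsupp.prod_fintype _ _ (by simp), Fin.prod_univ_three, ← smul_eq_C_mul]
  rfl

/- By coprimality, all monomials of a given degree have the same exponents modulo `a`, `b`
and `c`. -/
theorem exists_eq_mul_aeval (ha : a ≠ 0) (hb : b ≠ 0) (hc : c ≠ 0) (hab : a.Coprime b)
    (hac : a.Coprime c) (hbc : b.Coprime c) {d : ℤ} {f : PhamBrieskornRing k a b c}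
    (hf : f ∈ grading k a b c d) (hf0 : f ≠ 0) :
    ∃ (i j l n : ℕ) (P : MvPolynomial (Fin 2) k), P.IsHomogeneous n ∧
      d = (b * c * i + a * c * j + a * b * l + a * b * c * n : ℕ) ∧
      f = x ^ i * y ^ j * z ^ l * aeval ![x ^ a, y ^ b] P := by
  obtain ⟨F, hF, rfl⟩ := hf
  obtain ⟨s, hs⟩ := support_nonempty.2 (show F ≠ 0 by rintro rfl; exact hf0 (map_zero _))
  have hdeg {t : Fin 3 →₀ ℕ} (ht : t ∈ F.support) :
      ((b * c * t 0 + a * c * t 1 + a * b * t 2 : ℕ) : ℤ) = d :=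
    (weight_eq t).symm.trans (hF (mem_support_iff.1 ht))
  set n := s 0 / a + s 1 / b + s 2 / c
  let reducedForms : Submodule k (PhamBrieskornRing k a b c) :=
    (homogeneousSubmodule (Fin 2) k n).map
      (LinearMap.mulLeft k (x ^ (s 0 % a) * y ^ (s 1 % b) * z ^ (s 2 % c)) ∘ₗ
        (aeval ![x ^ a, y ^ b]).toLinearMap)
  have hmem : (Ideal.Quotient.mk _ F : PhamBrieskornRing k a b c) ∈ reducedForms := by
    rw [F.as_sum, map_sum]
    refine sum_mem fun t ht => ?_
    rw [mk_monomial]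
    obtain ⟨P, hP, hPt⟩ := exists_monomial_eq_mul_aeval (k := k) (a := a) (b := b) (c := c)
      (t 0) (t 1) (t 2)
    obtain ⟨h0, h1, h2, hn⟩ := mod_eq_and_sum_div_eq_of_weighted_sum_eq ha hb hc hab hac hbc
      (Nat.cast_injective ((hdeg ht).trans (hdeg hs).symm))
    rw [hn] at hP
    rw [h0, h1, h2] at hPt
    exact reducedForms.smul_mem _ ⟨P, hP, hPt.symm⟩
  obtain ⟨P, hP, hPF⟩ := hmem
  refine ⟨_, _, _, n, P, hP, ?_, hPF.symm⟩
  rw [← hdeg hs, weighted_sum_eq_add_sum_div]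

theorem grading_zero_le_one (ha : a ≠ 0) (hb : b ≠ 0) (hc : c ≠ 0) (hab : a.Coprime b)
    (hac : a.Coprime c) (hbc : b.Coprime c) : grading k a b c 0 ≤ 1 := by
  intro f hf
  rcases eq_or_ne f 0 with rfl | hf0
  · exact zero_mem _
  obtain ⟨i, j, l, n, P, hP, hd, rfl⟩ := exists_eq_mul_aeval ha hb hc hab hac hbc hf hf0
  obtain ⟨rfl, rfl, rfl, rfl⟩ : i = 0 ∧ j = 0 ∧ l = 0 ∧ n = 0 := by
    simpa [ha, hb, hc, and_assoc] using (Nat.cast_injective hd).symm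
  rw [totalDegree_eq_zero_iff_eq_C.1 (Nat.le_zero.1 hP.totalDegree_le), aeval_C]
  simp

section LocallyNilpotent

variable [IsAlgClosed k] [CharZero k]
  {E : Derivation k (PhamBrieskornRing k a b c) (PhamBrieskornRing k a b c)}

theorem derivation_eq_zero_of_apply_generator_eq_zero (hE : IsLocallyNilpotent E) (ha : 2 ≤ a)
    (hb : 2 ≤ b) (hc : 2 ≤ c) (h : E x = 0 ∨ E y = 0 ∨ E z = 0) : E = 0 := by
  have ha0 : a ≠ 0 := by omega
  have hb0 : b ≠ 0 := by omega
  have hc0 : c ≠ 0 := by omega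
  have := isDomain (k := k) ha0 hb0 hc0
  have := algebraRat.charZero (PhamBrieskornRing k a b c)
  have hrel := x_pow_add_y_pow_add_z_pow (k := k) (a := a) (b := b) (c := c)
  rcases h with hx | hy | hz
  · obtain ⟨hy, hz⟩ := hE.apply_eq_zero_of_pow_add_pow_add_pow_eq_zero hb hc hrel
      (x_ne_zero ha0 hb0 hc0) hx
    exact derivation_eq_zero hx hy hz
  · have hrel' : (y ^ b + x ^ a + z ^ c : PhamBrieskornRing k a b c) = 0 := by
      rw [← hrel, add_comm (y ^ b)]
    obtain ⟨hx, hz⟩ := hE.apply_eq_zero_of_pow_add_pow_add_pow_eq_zero ha hc hrel'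
      (y_ne_zero ha0 hb0 hc0) hy
    exact derivation_eq_zero hx hy hz
  · have hrel' : (z ^ c + x ^ a + y ^ b : PhamBrieskornRing k a b c) = 0 := by
      rw [← hrel, add_assoc, add_comm]
    obtain ⟨hx, hy⟩ := hE.apply_eq_zero_of_pow_add_pow_add_pow_eq_zero ha hb hrel'
      (z_ne_zero ha0 hb0 hc0) hz
    exact derivation_eq_zero hx hy hz

theorem apply_x_or_apply_y_eq_zero_of_apply_linear (hE : IsLocallyNilpotent E) (ha : 2 ≤ a)
    (hb : 2 ≤ b) (hc : c ≠ 0) {α β : k} (hαβ : α ≠ 0 ∨ β ≠ 0)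
    (h : E (algebraMap k _ α * x ^ a + algebraMap k _ β * y ^ b) = 0) : E x = 0 ∨ E y = 0 := by
  have ha0 : a ≠ 0 := by omega
  have hb0 : b ≠ 0 := by omega
  have := isDomain (k := k) ha0 hb0 hc
  have := algebraRat.charZero (PhamBrieskornRing k a b c)
  have hinj := (algebraMap k (PhamBrieskornRing k a b c)).injective
  have h0 := algebraMap_mul_x_pow_add_ne_zero ha0 hb0 hc hαβ
  rcases hαβ with hα | hβ
  · exact .inl <| hE.apply_eq_zero_of_apply_add_pow_eq_zero (E.map_algebraMap α)
      (E.map_algebraMap β) ((map_ne_zero_iff _ hinj).2 hα) ha hb h h0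
  · rw [add_comm (_ * x ^ a)] at h h0
    exact .inr <| hE.apply_eq_zero_of_apply_add_pow_eq_zero (E.map_algebraMap β)
      (E.map_algebraMap α) ((map_ne_zero_iff _ hinj).2 hβ) hb ha h h0

theorem derivation_eq_zero_of_homogeneous_mem_ker (hE : IsLocallyNilpotent E) (ha : 2 ≤ a)
    (hb : 2 ≤ b) (hc : 2 ≤ c) (hab : a.Coprime b) (hac : a.Coprime c) (hbc : b.Coprime c)
    {d : ℤ} (hd : d ≠ 0) {f : PhamBrieskornRing k a b c} (hf : f ∈ grading k a b c d)
    (hf0 : f ≠ 0) (hEf : E f = 0) : E = 0 := by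
  have ha0 : a ≠ 0 := by omega
  have hb0 : b ≠ 0 := by omega
  have hc0 : c ≠ 0 := by omega
  have := isDomain (k := k) ha0 hb0 hc0
  have := algebraRat.charZero (PhamBrieskornRing k a b c)
  have hker {g : PhamBrieskornRing k a b c} (hg : g ∣ f) : E g = 0 :=
    hE.apply_eq_zero_of_dvd hg hf0 hEf
  refine derivation_eq_zero_of_apply_generator_eq_zero hE ha hb hc ?_
  obtain ⟨i, j, l, n, P, hP, rfl, rfl⟩ := exists_eq_mul_aeval ha0 hb0 hc0 hab hac hbc hf hf0
  obtain hi | hj | hl | hn : i ≠ 0 ∨ j ≠ 0 ∨ l ≠ 0 ∨ n ≠ 0 := by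
    by_contra! h
    simp [h] at hd
  · exact .inl <| hker <| (((dvd_pow_self x hi).mul_right _).mul_right _).mul_right _
  · exact .inr <| .inl <| hker <| (((dvd_pow_self y hj).mul_left _).mul_right _).mul_right _
  · exact .inr <| .inr <| hker <| ((dvd_pow_self z hl).mul_left _).mul_right _
  · obtain ⟨α, β, hαβ, hdvd⟩ := exists_linear_dvd_of_isHomogeneous hn hP
    have hform := map_dvd (aeval ![(x ^ a : PhamBrieskornRing k a b c), y ^ b]) hdvd
    simp only [map_add, map_mul, aeval_X, algHom_C, Matrix.cons_val_zero,
      Matrix.cons_val_one] at hform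
    have hEform := hker (hform.mul_left _)
    exact (apply_x_or_apply_y_eq_zero_of_apply_linear hE ha hb hc0 hαβ hEform).imp_right .inl

end LocallyNilpotent

end PhamBrieskornRing

open PhamBrieskornRing in
theorem poincareSurfaceRing_rigid_general {k : Type*} [Field k] [IsAlgClosed k] [CharZero k]
    {a b c : ℕ} (ha : 2 ≤ a) (hb : 2 ≤ b) (hc : 2 ≤ c) (hab : a.Coprime b) (hac : a.Coprime c)
    (hbc : b.Coprime c) {D : Derivation k (PhamBrieskornRing k a b c) (PhamBrieskornRing k a b c)}
    (hD : IsLocallyNilpotent D) : D = 0 := by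
  have ha0 : a ≠ 0 := by omega
  have hb0 : b ≠ 0 := by omega
  have hc0 : c ≠ 0 := by omega
  by_contra hD0
  obtain ⟨E, m, hE, hE0, hEm⟩ := hD.exists_homogeneous hD0 (grading k a b c)
  obtain ⟨d, hd, f, hf, hf0, hEf⟩ := hE.exists_homogeneous_mem_ker hEm
    (grading_zero_le_one ha0 hb0 hc0 hab hac hbc) (by positivity) x_pow_mem_grading
    y_pow_mem_grading (linearIndependent_x_pow_y_pow ha0 hb0 hc0)
  exact hE0 (derivation_eq_zero_of_homogeneous_mem_ker hE ha hb hc hab hac hbc hd hf hf0 hEf)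

/-- Over an algebraically closed field `k` of characteristic zero, the ring
`B = k[x, y, z]/(x⁵ + y³ + z²)` is rigid: its only locally nilpotent `k`-derivation is `0`. -/
theorem poincareSurfaceRing_rigid (k : Type*) [Field k] [IsAlgClosed k] [CharZero k]
    (D : Derivation k (PoincareSurfaceRing k) (PoincareSurfaceRing k))
    (hln : ∀ b : PoincareSurfaceRing k, ∃ N : ℕ, (D.toLinearMap ^ N) b = 0) :
    D = 0 := by
  exact poincareSurfaceRing_rigid_general (a := 5) (b := 3) (c := 2) (by decide) (by decide)
    (by decide) (by decide) (by decide) (by decide) (isLocallyNilpotent_iff_toLinearMap_pow.2 hln)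
end
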